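/- Let $f_1,\dots,f_n$ be real analytic and not identically zero near the origin of $\mathbb{R}^2$, let $\gamma_1,\dots,\gamma_n\in\mathbb{R}$, and let $E\subset\mathbb{R}^2$ be either a disk centered at the origin or a finite disjoint union of open regions $E_j$, each of which is one of the two regions bounded by a circle $x^2+y^2=r_0^2$ and two curves joining the origin to that circle; each curve is half of a graph $y=h(|x|^{1/N})$ or $x=h(|y|^{1/N})$ with $h$ real analytic and $h(0)=0$, and all these boundary curves of $E$ are pairwise disjoint except at the origin. Assume that $g=\chi_E\prod_{i=1}^n|f_i|^{\gamma_i}$ is integrable near the origin. Let $\epsilon>0$ and $d\in\{0,1\}$ be the ball exponents of $g$: for some $c_1,c_2>0$ one has $c_1r^{\epsilon}|\ln r|^d\le\int_{x^2+y^2<r^2}g\,dx\,dy\le c_2r^{\epsilon}|\ln r|^d$ for all sufficiently small $r>0$. Let $n_i$ denote the order of the zero of $f_i$ at the origin. Then, for every sufficiently small disk $B$ centered at the origin, the following holds. Let $B'\subset B$ be a wedge of the first type, that is, a region bounded by two rays from the origin and the boundary of $B$ such that (i) for each $i$ there are positive constants $c_i,c_i'$ with $c_i(x^2+y^2)^{n_i/2}<|f_i(x,y)|<c_i'(x^2+y^2)^{n_i/2}$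 on $B'$; (ii) the boundary curves of $E$ do not meet the closure of $B'$ except at the origin. Let $A,C$ be constants. Then there is a constant $C_a$ (depending on $g$, $B'$, $A$, $C$, but not otherwise on $\alpha$) such that, for every real function $\alpha$ on $\mathbb{R}^2$ that is $C^1$ away from the origin with $|\alpha(x,y)|\le A$ and $|\nabla\alpha(x,y)|\le A(x^2+y^2)^{-1/2}$ and that satisfies (iii) $\displaystyle\Big|\int_{B'}\alpha\, g\,e^{i(tx+uy)}\,dx\,dy\Big|\le C\int_{B'}(1+|tx|+|uy|)^{-1}g\,dx\,dy$ for all $(t,u)\in\mathbb{R}^2$, and for all $(t,u)\in\mathbb{R}^2$, the quantity $\big|\int_{B'}\alpha\,g\,e^{i(tx+uy)}\,dx\,dy\big|$ is at most $$C_a(2+|(t,u)|)^{-\epsilon}(\ln(2+|(t,u)|))^{d}\ \text{ if }\epsilon<1,\qquad C_a(2+|(t,u)|)^{-1}(\ln(2+|(t,u)|))^{d+1}\ \text{ if }\epsilon=1,$$ $$C_a(2+|(t,u)|)^{-1}\ \text{ if }\epsilon>1.$$ -/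

import Mathlib

open MeasureTheory Set Filter
open scoped Topology

noncomputable section

/-- The Euclidean magnitude `|(x,y)| = √(x²+y²)` of a point of `ℝ²`. -/
def nrm2 (p : ℝ × ℝ) : ℝ := Real.sqrt (p.1 ^ 2 + p.2 ^ 2)

/-- The open Euclidean disk `{(x,y) : x²+y² < r²}` centered at the origin. -/
def disk2 (r : ℝ) : Set (ℝ × ℝ) := {p : ℝ × ℝ | p.1 ^ 2 + p.2 ^ 2 < r ^ 2}

/-- The function `g = χ_E · ∏ᵢ |fᵢ|^(γᵢ)`. -/
def stdFun (n : ℕ) (f : Fin n → ℝ × ℝ → ℝ) (γ : Fin n → ℝ) (E : Set (ℝ × ℝ)) :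
    ℝ × ℝ → ℝ :=
  E.indicator fun p => ∏ i, |f i p| ^ (γ i)

/-- A boundary curve: a half (`σ = 1` or `σ = -1`) of a graph `y = h(|x|^{1/N})` or
`x = h(|y|^{1/N})` with `h` real analytic and `h 0 = 0`, followed from the origin until it
reaches the circle of radius `r₀`. -/
def IsPuiseuxBdryCurve (r₀ : ℝ) (C : Set (ℝ × ℝ)) : Prop :=
  ∃ (N : ℕ) (h : ℝ → ℝ) (σ a : ℝ),
    0 < N ∧ (σ = 1 ∨ σ = -1) ∧ 0 < a ∧
    AnalyticOnNhd ℝ h (Icc (0:ℝ) (a ^ ((N:ℝ)⁻¹))) ∧ h 0 = 0 ∧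
    (∀ x ∈ Ico (0:ℝ) a, x ^ 2 + h (x ^ ((N:ℝ)⁻¹)) ^ 2 < r₀ ^ 2) ∧
    a ^ 2 + h (a ^ ((N:ℝ)⁻¹)) ^ 2 = r₀ ^ 2 ∧
    (C = (fun x : ℝ => ((σ * x, h (x ^ ((N:ℝ)⁻¹))) : ℝ × ℝ)) '' Icc (0:ℝ) a ∨
     C = (fun x : ℝ => ((h (x ^ ((N:ℝ)⁻¹)), σ * x) : ℝ × ℝ)) '' Icc (0:ℝ) a)

/-- The admissible sets `E`: either a disk centered at the origin, or a finite disjoint union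
of regions (open connected sets), each of which is one of the two regions bounded by two curves
joining the origin to the circle of radius `r₀` together with that circle; all the boundary
curves are pairwise disjoint away from the origin. -/
def IsStdDomain (E : Set (ℝ × ℝ)) : Prop :=
  (∃ r₀ > (0:ℝ), E = disk2 r₀) ∨
  (∃ r₀ > (0:ℝ), ∃ m : ℕ, ∃ Es : Fin m → Set (ℝ × ℝ), ∃ Cs : Fin m → Fin 2 → Set (ℝ × ℝ),
    E = Set.iUnion Es ∧
    (Pairwise fun i j => Disjoint (Es i) (Es j)) ∧
    (∀ i, IsOpen (Es i) ∧ IsConnected (Es i) ∧ Es i ⊆ disk2 r₀ ∧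
      frontier (Es i) ∩ disk2 r₀ = (Cs i 0 ∪ Cs i 1) ∩ disk2 r₀) ∧
    (∀ i j, IsPuiseuxBdryCurve r₀ (Cs i j)) ∧
    (Pairwise fun (q q' : Fin m × Fin 2) =>
      Disjoint (Cs q.1 q.2 \ {0}) (Cs q'.1 q'.2 \ {0})))

/-- The standard form: the `fᵢ` are real analytic and not identically zero near the origin,
`g = χ_E ∏ |fᵢ|^(γᵢ)` is integrable near the origin, and `E` is an admissible domain. -/
structure StandardForm (n : ℕ) (f : Fin n → ℝ × ℝ → ℝ) (γ : Fin n → ℝ)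
    (E : Set (ℝ × ℝ)) : Prop where
  analytic : ∃ U ∈ 𝓝 (0 : ℝ × ℝ), ∀ i, AnalyticOnNhd ℝ (f i) U
  nontriv : ∀ i, ¬ (∀ᶠ p in 𝓝 (0 : ℝ × ℝ), f i p = 0)
  integ : ∃ U ∈ 𝓝 (0 : ℝ × ℝ), IntegrableOn (stdFun n f γ E) U
  domain : IsStdDomain E

/-- `ε`, `d` are the ball exponents of `g`: `ε > 0`, `d ∈ {0,1}` and
`c₁ r^ε |log r|^d ≤ ∫_{x²+y²<r²} g ≤ c₂ r^ε |log r|^d` for all small `r > 0`. -/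
def BallBound (g : ℝ × ℝ → ℝ) (ε : ℝ) (d : ℕ) : Prop :=
  0 < ε ∧ d ≤ 1 ∧ ∃ c₁ > (0:ℝ), ∃ c₂ > (0:ℝ), ∃ c₃ > (0:ℝ), ∀ r : ℝ, 0 < r → r < c₃ →
    c₁ * r ^ ε * |Real.log r| ^ d ≤ (∫ p in disk2 r, g p) ∧
    (∫ p in disk2 r, g p) ≤ c₂ * r ^ ε * |Real.log r| ^ d

/-- The order of the zero of `f` at the origin: the least order of a nonzero derivative. -/
def vanishingOrder (f : ℝ × ℝ → ℝ) : ℕ :=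
  sInf {k : ℕ | iteratedFDeriv ℝ k f 0 ≠ 0}

/-- The Euclidean length `|∇α(p)|` of the gradient. -/
def gradNorm (α : ℝ × ℝ → ℝ) (p : ℝ × ℝ) : ℝ :=
  nrm2 (fderiv ℝ α p (1, 0), fderiv ℝ α p (0, 1))

/-- The conditions on the amplitude `α`: it is `C¹` away from the origin, bounded by `A`, and
its gradient is bounded by `A (x²+y²)^{-1/2}`. -/
def AlphaBound (α : ℝ × ℝ → ℝ) (A : ℝ) : Prop :=
  ContDiffOn ℝ 1 α {(0:ℝ×ℝ)}ᶜ ∧ (∀ p, |α p| ≤ A) ∧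
  ∀ p : ℝ × ℝ, p ≠ 0 → gradNorm α p ≤ A * (nrm2 p)⁻¹

/-- The oscillatory integral `∫_S h(x,y) e^{i(tx+uy)} dx dy`. -/
def oscInt (h : ℝ × ℝ → ℝ) (S : Set (ℝ × ℝ)) (t u : ℝ) : ℂ :=
  ∫ p in S, (h p : ℂ) * Complex.exp (Complex.I * ((t : ℂ) * (p.1 : ℂ) + (u : ℂ) * (p.2 : ℂ)))

/-- A wedge of radius `r` at the origin: a region bounded by two rays from the origin and the
circle of radius `r`. -/
def IsWedge (r : ℝ) (W : Set (ℝ × ℝ)) : Prop :=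
  ∃ θ₁ θ₂ : ℝ, θ₁ < θ₂ ∧ θ₂ ≤ θ₁ + 2 * Real.pi ∧
    W = {p : ℝ × ℝ | ∃ ρ θ : ℝ, 0 < ρ ∧ ρ < r ∧ θ₁ < θ ∧ θ < θ₂ ∧
      p = (ρ * Real.cos θ, ρ * Real.sin θ)}

/-- The geometric conditions on a wedge of the first type: on it each `|fᵢ|` is comparable to
`|(x,y)|^{nᵢ}`, with `nᵢ` the order of the zero of `fᵢ` at the origin, and its closure does not
meet the boundary curves of `E` except at the origin. (In a small disk around the origin the
boundary of `E` consists exactly of the boundary curves.) -/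
structure IsFirstTypeWedge (n : ℕ) (f : Fin n → ℝ × ℝ → ℝ) (E : Set (ℝ × ℝ)) (r : ℝ)
    (W : Set (ℝ × ℝ)) : Prop where
  wedge : IsWedge r W
  comparable : ∀ i, ∃ c > (0:ℝ), ∃ c' > (0:ℝ), ∀ p ∈ W,
    c * nrm2 p ^ vanishingOrder (f i) < |f i p| ∧
    |f i p| < c' * nrm2 p ^ vanishingOrder (f i)
  boundary : Disjoint (closure W \ {0}) (frontier E)

/-- The first-type estimate on `W` with constant `C`:
`|∫_W α g e^{i(tx+uy)}| ≤ C ∫_W (1+|tx|+|uy|)^{-1} g` for all `(t,u)`. -/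
def FirstTypeEstimate (α g : ℝ × ℝ → ℝ) (W : Set (ℝ × ℝ)) (C : ℝ) : Prop :=
  ∀ t u : ℝ, ‖oscInt (fun p => α p * g p) W t u‖ ≤
    C * ∫ p in W, (1 + |t * p.1| + |u * p.2|)⁻¹ * g p

end

/-!
On a wedge of the first type `g` is comparable to a pure power `|p| ^ s`, and its gradient is at
most a multiple of `|p| ^ (s - 1)`. The mass of a disk of radius `τ` is then at least a multiple of
`τ ^ (s + 2)`, and the assumed growth of that mass forces `ε ≤ s + 2`. So `α g` is bounded by
`|p| ^ (ε - 2)`, and its gradient by `|p| ^ (ε - 3)`, and these bounds alone imply the decay.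
Cut the wedge at a radius `δ ∼ 1 / |(t, u)|`. The inner part has mass `O(δ ^ ε)`. In the outer part
integrate by parts in the direction `(t, u)`, by Gauss–Green on an annular sector: the gain of
`|(t, u)|⁻¹` leaves boundary terms and `∫ ρ in δ..r, ρ ^ (ε - 2)`, whose size as `δ → 0` separates
the three cases.
-/

/-! ### Polar coordinates and sectors -/

section Polar

theorem nrm2_nonneg (p : ℝ × ℝ) : 0 ≤ nrm2 p := Real.sqrt_nonneg _

theorem nrm2_sq (p : ℝ × ℝ) : nrm2 p ^ 2 = p.1 ^ 2 + p.2 ^ 2 :=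
  Real.sq_sqrt (by positivity)

theorem continuous_nrm2 : Continuous nrm2 := by
  unfold nrm2
  fun_prop

theorem norm_le_nrm2 (p : ℝ × ℝ) : ‖p‖ ≤ nrm2 p :=
  max_le (Real.abs_le_sqrt (by nlinarith [sq_nonneg p.2]))
    (Real.abs_le_sqrt (by nlinarith [sq_nonneg p.1]))

theorem nrm2_pos {p : ℝ × ℝ} (hp : p ≠ 0) : 0 < nrm2 p :=
  (norm_pos_iff.2 hp).trans_le (norm_le_nrm2 p)

theorem mem_disk2_iff {p : ℝ × ℝ} {r : ℝ} (hr : 0 ≤ r) : p ∈ disk2 r ↔ nrm2 p < r :=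
  (Real.sqrt_lt (by positivity) hr).symm

theorem disk2_subset_ball {r : ℝ} (hr : 0 ≤ r) : disk2 r ⊆ Metric.ball 0 r := fun p hp => by
  rw [mem_ball_zero_iff]
  exact (norm_le_nrm2 p).trans_lt ((mem_disk2_iff hr).1 hp)

theorem nrm2_polarCoord_symm {q : ℝ × ℝ} (hq : 0 ≤ q.1) : nrm2 (polarCoord.symm q) = q.1 := by
  rw [nrm2, polarCoord_symm_apply, Real.sqrt_eq_iff_eq_sq (by positivity) hq]
  linear_combination q.1 ^ 2 * Real.sin_sq_add_cos_sq q.2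

theorem injOn_polarCoord_symm {θ₁ θ₂ : ℝ} (h : θ₂ ≤ θ₁ + 2 * Real.pi) :
    InjOn polarCoord.symm (Ioi 0 ×ˢ Ioo θ₁ θ₂) := by
  rintro ⟨ρ, θ⟩ ⟨hρ, hθ⟩ ⟨ρ', θ'⟩ ⟨hρ', hθ'⟩ heq
  simp only [mem_Ioi] at hρ hρ'
  obtain rfl : ρ = ρ' := by
    have := congrArg nrm2 heq
    rwa [nrm2_polarCoord_symm hρ.le, nrm2_polarCoord_symm hρ'.le] at this
  simp only [polarCoord_symm_apply, Prod.mk.injEq] at heq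
  have hangle : (θ : Real.Angle) = θ' :=
    Real.Angle.cos_sin_inj (mul_left_cancel₀ hρ.ne' heq.1) (mul_left_cancel₀ hρ.ne' heq.2)
  have : Fact (0 < 2 * Real.pi) := ⟨Real.two_pi_pos⟩
  have hIco : Ioo θ₁ θ₂ ⊆ Ico θ₁ (θ₁ + 2 * Real.pi) := fun x hx => ⟨hx.1.le, hx.2.trans_le h⟩
  exact congrArg (ρ, ·) ((AddCircle.coe_eq_coe_iff_of_mem_Ico (hIco hθ) (hIco hθ')).1 hangle)

/-- The open sector of the annulus `a < |p| < b` between the directions `θ₁` and `θ₂`; with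
`a = 0` it is a wedge. -/
noncomputable def annularSector (a b θ₁ θ₂ : ℝ) : Set (ℝ × ℝ) :=
  polarCoord.symm '' (Ioo a b ×ˢ Ioo θ₁ θ₂)

/-- The sector of the punctured closed disk of radius `r` between the directions `θ₁` and `θ₂`,
with its boundary rays and its boundary arc. -/
noncomputable def closedSector (r θ₁ θ₂ : ℝ) : Set (ℝ × ℝ) :=
  polarCoord.symm '' (Ioc 0 r ×ˢ Icc θ₁ θ₂)

variable {a b r θ₁ θ₂ : ℝ}

theorem isWedge_iff {W : Set (ℝ × ℝ)} : IsWedge r W ↔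
    ∃ θ₁ θ₂ : ℝ, θ₁ < θ₂ ∧ θ₂ ≤ θ₁ + 2 * Real.pi ∧ W = annularSector 0 r θ₁ θ₂ := by
  have key (θ₁ θ₂ : ℝ) : {p : ℝ × ℝ | ∃ ρ θ : ℝ, 0 < ρ ∧ ρ < r ∧ θ₁ < θ ∧ θ < θ₂ ∧
      p = (ρ * Real.cos θ, ρ * Real.sin θ)} = annularSector 0 r θ₁ θ₂ := by
    ext p
    simp only [annularSector, mem_image, mem_prod, mem_Ioo, Prod.exists, mem_ofPred_eq,
      polarCoord_symm_apply, and_assoc, eq_comm (a := p)]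
  simp only [IsWedge, key]

theorem pos_and_le_of_mem_closedSector {p : ℝ × ℝ} (hp : p ∈ closedSector r θ₁ θ₂) :
    0 < nrm2 p ∧ nrm2 p ≤ r := by
  obtain ⟨q, hq, rfl⟩ := hp
  rw [nrm2_polarCoord_symm hq.1.1.le]
  exact hq.1

theorem annularSector_subset_closedSector : annularSector 0 r θ₁ θ₂ ⊆ closedSector r θ₁ θ₂ :=
  image_mono (prod_mono Ioo_subset_Ioc_self Ioo_subset_Icc_self)

theorem zero_notMem_closedSector : (0 : ℝ × ℝ) ∉ closedSector r θ₁ θ₂ := fun h => by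
  simpa only [nrm2, Prod.fst_zero, Prod.snd_zero, ne_eq, OfNat.ofNat_ne_zero, not_false_eq_true,
    zero_pow, add_zero, Real.sqrt_zero, lt_irrefl] using (pos_and_le_of_mem_closedSector h).1

theorem closedSector_subset_closure (hr : 0 < r) (hθ : θ₁ < θ₂) :
    closedSector r θ₁ θ₂ ⊆ closure (annularSector 0 r θ₁ θ₂) := by
  refine Subset.trans (image_mono ?_)
    (image_closure_subset_closure_image continuous_polarCoord_symm)
  rw [closure_prod_eq, closure_Ioo hr.ne, closure_Ioo hθ.ne]
  exact prod_mono Ioc_subset_Icc_self subset_rfl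

theorem isPreconnected_annularSector : IsPreconnected (annularSector a b θ₁ θ₂) :=
  (isPreconnected_Ioo.prod isPreconnected_Ioo).image _ continuous_polarCoord_symm.continuousOn

theorem measurableSet_annularSector (h : θ₂ ≤ θ₁ + 2 * Real.pi) (ha : 0 ≤ a) :
    MeasurableSet (annularSector a b θ₁ θ₂) :=
  (measurableSet_Ioo.prod measurableSet_Ioo).image_of_continuousOn_injOn
    continuous_polarCoord_symm.continuousOn
    ((injOn_polarCoord_symm h).mono (prod_mono (fun _ hx => ha.trans_lt hx.1) subset_rfl))

theorem setIntegral_annularSector {F : Type*} [NormedAddCommGroup F] [NormedSpace ℝ F]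
    (h : θ₂ ≤ θ₁ + 2 * Real.pi) (ha : 0 ≤ a) (g : ℝ × ℝ → F) :
    ∫ p in annularSector a b θ₁ θ₂, g p =
      ∫ q in Ioo a b ×ˢ Ioo θ₁ θ₂, q.1 • g (polarCoord.symm q) := by
  have hsub : Ioo a b ×ˢ Ioo θ₁ θ₂ ⊆ Ioi (0 : ℝ) ×ˢ Ioo θ₁ θ₂ :=
    prod_mono (fun x hx => ha.trans_lt hx.1) subset_rfl
  have hm : MeasurableSet (Ioo a b ×ˢ Ioo θ₁ θ₂) := measurableSet_Ioo.prod measurableSet_Ioo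
  rw [annularSector, integral_image_eq_integral_abs_det_fderiv_smul volume hm
    (fun x _ => (hasFDerivAt_polarCoord_symm x).hasFDerivWithinAt)
    ((injOn_polarCoord_symm h).mono hsub)]
  refine setIntegral_congr_fun hm fun q hq => ?_
  simp only [det_fderivPolarCoordSymm, abs_of_pos (mem_Ioi.1 (hsub hq).1)]

theorem measureReal_annularSector (hθ : θ₁ ≤ θ₂) (h : θ₂ ≤ θ₁ + 2 * Real.pi)
    (ha : 0 ≤ a) (hab : a ≤ b) :
    volume.real (annularSector a b θ₁ θ₂) = (b ^ 2 - a ^ 2) / 2 * (θ₂ - θ₁) := by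
  have hpolar := setIntegral_annularSector (b := b) h ha fun _ => (1 : ℝ)
  have hfubini := setIntegral_prod_mul (μ := volume) (ν := volume) (fun x : ℝ => x)
    (fun _ : ℝ => (1 : ℝ)) (Ioo a b) (Ioo θ₁ θ₂)
  simp only [setIntegral_const, smul_eq_mul, mul_one] at hpolar hfubini
  rw [hpolar, Measure.volume_eq_prod, hfubini, ← integral_Ioc_eq_integral_Ioo,
    ← intervalIntegral.integral_of_le hab, integral_id, Real.volume_real_Ioo_of_le hθ]

theorem annularSector_subset_disk2 (ha : 0 ≤ a) : annularSector a b θ₁ θ₂ ⊆ disk2 b := by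
  rintro _ ⟨q, ⟨⟨hq, hqb⟩, -⟩, rfl⟩
  have hq0 : 0 ≤ q.1 := ha.trans hq.le
  rwa [mem_disk2_iff (hq0.trans hqb.le), nrm2_polarCoord_symm hq0]

end Polar

theorem subset_or_disjoint_of_disjoint_frontier {X : Type*} [TopologicalSpace X]
    {s E : Set X} (hs : IsPreconnected s) (h : Disjoint s (frontier E)) :
    s ⊆ E ∨ Disjoint s E := by
  have hcover : s ⊆ interior E ∪ (closure E)ᶜ := fun x hx =>
    or_iff_not_imp_left.2 fun hint hcl => disjoint_left.1 h hx ⟨hcl, hint⟩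
  have hdisj : Disjoint (interior E) (closure E)ᶜ :=
    disjoint_compl_right_iff_subset.2 (interior_subset.trans subset_closure)
  refine (hs.subset_or_subset isOpen_interior isClosed_closure.isOpen_compl hdisj hcover).imp
    (·.trans interior_subset) fun hc => ?_
  exact (disjoint_compl_left_iff_subset.2 subset_closure).mono_left hc

/-! ### Symbols -/

section Symbols

variable {V : Type*} [NormedAddCommGroup V] [NormedSpace ℝ V] {w : V → ℝ} {Z Z' : Set V}
  {s s' s₁ s₂ K K₁ K₂ r : ℝ} {G G₁ G₂ : V → ℝ}

/-- `G` is a symbol of order `s` on `Z` for the weight `w`: it is `C¹` near the points of `Z`, with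
`|G| ≤ K w ^ s` and `|DG| ≤ K w ^ (s - 1)` there. The second bound is multiplied by `w`, so that
both have the same right-hand side. -/
structure IsSymbolOn (w : V → ℝ) (Z : Set V) (s K : ℝ) (G : V → ℝ) : Prop where
  nonneg : 0 ≤ K
  contDiffAt : ∀ p ∈ Z, ContDiffAt ℝ 1 G p
  abs_le : ∀ p ∈ Z, |G p| ≤ K * w p ^ s
  fderiv_le : ∀ p ∈ Z, ‖fderiv ℝ G p‖ * w p ≤ K * w p ^ s

/-- An elliptic symbol of order `s`: a symbol of order `s` which is also bounded below by a
positive multiple of `w ^ s`. -/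
structure IsEllipticSymbolOn (w : V → ℝ) (Z : Set V) (s : ℝ) (G : V → ℝ) : Prop where
  isSymbolOn : ∃ K, IsSymbolOn w Z s K G
  lower_bound : ∃ k > 0, ∀ p ∈ Z, k * w p ^ s ≤ |G p|

namespace IsSymbolOn

theorem mono_set (h : IsSymbolOn w Z s K G) (hZ : Z' ⊆ Z) : IsSymbolOn w Z' s K G :=
  ⟨h.nonneg, fun p hp => h.contDiffAt p (hZ hp), fun p hp => h.abs_le p (hZ hp),
    fun p hp => h.fderiv_le p (hZ hp)⟩

theorem hasFDerivAt (h : IsSymbolOn w Z s K G) {p : V} (hp : p ∈ Z) :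
    HasFDerivAt G (fderiv ℝ G p) p :=
  ((h.contDiffAt p hp).differentiableAt one_ne_zero).hasFDerivAt

theorem mono_order (hw : ∀ p ∈ Z, 0 < w p ∧ w p ≤ r) (h : IsSymbolOn w Z s K G) (hs : s' ≤ s)
    (hr : 0 ≤ r) : IsSymbolOn w Z s' (K * r ^ (s - s')) G := by
  have key : ∀ p ∈ Z, K * w p ^ s ≤ K * r ^ (s - s') * w p ^ s' := fun p hp => by
    obtain ⟨hpos, hle⟩ := hw p hp
    have := Real.rpow_le_rpow hpos.le hle (sub_nonneg.2 hs)
    rw [mul_assoc, ← sub_add_cancel s s', Real.rpow_add hpos, add_sub_cancel_right]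
    have := h.nonneg
    gcongr
  exact ⟨mul_nonneg h.nonneg (by positivity), h.contDiffAt,
    fun p hp => (h.abs_le p hp).trans (key p hp),
    fun p hp => (h.fderiv_le p hp).trans (key p hp)⟩

theorem mul (hw : ∀ p ∈ Z, 0 < w p) (h₁ : IsSymbolOn w Z s₁ K₁ G₁)
    (h₂ : IsSymbolOn w Z s₂ K₂ G₂) :
    IsSymbolOn w Z (s₁ + s₂) (2 * (K₁ * K₂)) fun p => G₁ p * G₂ p := by
  have hK : 0 ≤ K₁ * K₂ := mul_nonneg h₁.nonneg h₂.nonneg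
  refine ⟨by positivity, fun p hp => (h₁.contDiffAt p hp).mul (h₂.contDiffAt p hp),
    fun p hp => ?_, fun p hp => ?_⟩
  all_goals
    have hwp := hw p hp
    have h₁0 := (abs_nonneg _).trans (h₁.abs_le p hp)
    have h₂0 := (abs_nonneg _).trans (h₂.abs_le p hp)
    rw [Real.rpow_add hwp]
  · calc |G₁ p * G₂ p| = |G₁ p| * |G₂ p| := abs_mul _ _
      _ ≤ K₁ * w p ^ s₁ * (K₂ * w p ^ s₂) := by
        gcongr
        exacts [h₁.abs_le p hp, h₂.abs_le p hp]
      _ ≤ 2 * (K₁ * K₂) * (w p ^ s₁ * w p ^ s₂) := by nlinarith [mul_nonneg h₁0 h₂0]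
  · have hprod : fderiv ℝ (fun p => G₁ p * G₂ p) p = G₁ p • fderiv ℝ G₂ p + G₂ p • fderiv ℝ G₁ p :=
      ((h₁.hasFDerivAt hp).mul (h₂.hasFDerivAt hp)).fderiv
    calc ‖fderiv ℝ (fun p => G₁ p * G₂ p) p‖ * w p
        ≤ (|G₁ p| * ‖fderiv ℝ G₂ p‖ + |G₂ p| * ‖fderiv ℝ G₁ p‖) * w p := by
          rw [hprod, ← Real.norm_eq_abs, ← Real.norm_eq_abs, ← norm_smul, ← norm_smul]
          gcongr
          exact norm_add_le _ _
      _ = |G₁ p| * (‖fderiv ℝ G₂ p‖ * w p) + |G₂ p| * (‖fderiv ℝ G₁ p‖ * w p) := by ring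
      _ ≤ K₁ * w p ^ s₁ * (K₂ * w p ^ s₂) + K₂ * w p ^ s₂ * (K₁ * w p ^ s₁) :=
        add_le_add (mul_le_mul (h₁.abs_le p hp) (h₂.fderiv_le p hp) (by positivity) h₁0)
          (mul_le_mul (h₂.abs_le p hp) (h₁.fderiv_le p hp) (by positivity) h₂0)
      _ = 2 * (K₁ * K₂) * (w p ^ s₁ * w p ^ s₂) := by ring

end IsSymbolOn

theorem exists_rpow_comparable {c c' : ℝ} (hc : 0 < c) (hc' : 0 < c') (γ : ℝ) :
    ∃ k > 0, ∃ K > 0, ∀ x y : ℝ, 0 < y → c * y ≤ x → x ≤ c' * y →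
      k * y ^ γ ≤ x ^ γ ∧ x ^ γ ≤ K * y ^ γ := by
  have hcγ := Real.rpow_pos_of_pos hc γ
  have hc'γ := Real.rpow_pos_of_pos hc' γ
  refine ⟨min (c ^ γ) (c' ^ γ), lt_min hcγ hc'γ, max (c ^ γ) (c' ^ γ), lt_max_of_lt_left hcγ,
    fun x y hy hl hu => ?_⟩
  have hcy : 0 < c * y := mul_pos hc hy
  rw [min_mul_of_nonneg _ _ (by positivity), max_mul_of_nonneg _ _ (by positivity),
    ← Real.mul_rpow hc.le hy.le, ← Real.mul_rpow hc'.le hy.le]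
  rcases le_total 0 γ with hγ | hγ
  · exact ⟨(min_le_left _ _).trans (Real.rpow_le_rpow hcy.le hl hγ),
      (Real.rpow_le_rpow (hcy.le.trans hl) hu hγ).trans (le_max_right _ _)⟩
  · exact ⟨(min_le_right _ _).trans (Real.rpow_le_rpow_of_nonpos (hcy.trans_le hl) hu hγ),
      (Real.rpow_le_rpow_of_nonpos hcy hl hγ).trans (le_max_left _ _)⟩

theorem norm_fderiv_abs_rpow (γ : ℝ) {p : V} (hG : DifferentiableAt ℝ G p) (hp : G p ≠ 0) :
    ‖fderiv ℝ (fun x => |G x| ^ γ) p‖ = |γ| * |G p| ^ γ * (‖fderiv ℝ G p‖ / |G p|) := by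
  have habs : 0 < |G p| := abs_pos.2 hp
  have hsign : ‖((SignType.sign (G p) : SignType) : ℝ)‖ = 1 := by
    rcases hp.lt_or_gt with h | h <;> simp [h]
  rw [((hG.hasFDerivAt.abs hp).rpow_const (p := γ) (Or.inl habs.ne')).fderiv, norm_smul, norm_smul,
    hsign, norm_mul, Real.rpow_sub_one habs.ne', Real.norm_eq_abs, Real.norm_eq_abs, abs_div,
    abs_abs, Real.abs_rpow_of_nonneg (abs_nonneg _), abs_abs]
  ring

namespace IsEllipticSymbolOn

theorem one : IsEllipticSymbolOn w Z 0 fun _ => 1 where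
  isSymbolOn := ⟨1, zero_le_one, fun _ _ => contDiffAt_const, by simp, by simp⟩
  lower_bound := ⟨1, one_pos, by simp⟩

theorem mul (hw : ∀ p ∈ Z, 0 < w p) (h₁ : IsEllipticSymbolOn w Z s₁ G₁)
    (h₂ : IsEllipticSymbolOn w Z s₂ G₂) :
    IsEllipticSymbolOn w Z (s₁ + s₂) fun p => G₁ p * G₂ p := by
  obtain ⟨⟨K₁, hK₁⟩, k₁, hk₁, hl₁⟩ := h₁
  obtain ⟨⟨K₂, hK₂⟩, k₂, hk₂, hl₂⟩ := h₂
  refine ⟨⟨_, hK₁.mul hw hK₂⟩, k₁ * k₂, mul_pos hk₁ hk₂, fun p hp => ?_⟩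
  have := hw p hp
  rw [Real.rpow_add this, abs_mul, mul_mul_mul_comm]
  gcongr
  exacts [hl₁ p hp, hl₂ p hp]

theorem prod (hw : ∀ p ∈ Z, 0 < w p) {ι : Type*} (S : Finset ι) {m : ι → ℝ} {F : ι → V → ℝ}
    (h : ∀ i ∈ S, IsEllipticSymbolOn w Z (m i) (F i)) :
    IsEllipticSymbolOn w Z (∑ i ∈ S, m i) fun p => ∏ i ∈ S, F i p := by
  induction S using Finset.cons_induction with
  | empty => simpa only [Finset.sum_empty, Finset.prod_empty] using one
  | cons a S ha ih =>
    simp only [Finset.sum_cons, Finset.prod_cons]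
    exact (h a (Finset.mem_cons_self a S)).mul hw
      (ih fun i hi => h i (Finset.mem_cons_of_mem hi))

theorem abs_rpow (hw : ∀ p ∈ Z, 0 < w p) (h : IsEllipticSymbolOn w Z s G) (γ : ℝ) :
    IsEllipticSymbolOn w Z (γ * s) fun p => |G p| ^ γ := by
  obtain ⟨⟨K, hK⟩, c, hc, hl⟩ := h
  have hK0 := hK.nonneg
  obtain ⟨k, hk, K₁, hK₁, hcomp⟩ := exists_rpow_comparable hc (c' := K + 1) (by positivity) γ
  have hbounds : ∀ p ∈ Z, k * w p ^ (γ * s) ≤ |G p| ^ γ ∧ |G p| ^ γ ≤ K₁ * w p ^ (γ * s) := by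
    intro p hp
    have := hw p hp
    rw [mul_comm γ, Real.rpow_mul this.le]
    exact hcomp _ _ (by positivity) (hl p hp)
      ((hK.abs_le p hp).trans (by gcongr; exact le_add_of_nonneg_right zero_le_one))
  have hpos : ∀ p ∈ Z, 0 < |G p| := fun p hp =>
    (mul_pos hc (Real.rpow_pos_of_pos (hw p hp) s)).trans_le (hl p hp)
  have habs : ∀ p, |(|G p| ^ γ)| = |G p| ^ γ := fun p => abs_of_nonneg (by positivity)
  refine ⟨⟨K₁ * (1 + |γ| * (K / c)), by positivity, fun p hp => ?_, fun p hp => ?_,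
    fun p hp => ?_⟩, k, hk, fun p hp => (hbounds p hp).1.trans_eq (habs p).symm⟩
  · exact ((hK.contDiffAt p hp).abs (abs_pos.1 (hpos p hp))).rpow_const_of_ne (hpos p hp).ne'
  · have := hw p hp
    rw [habs]
    refine (hbounds p hp).2.trans ?_
    gcongr
    exact le_mul_of_one_le_right hK₁.le (le_add_of_nonneg_right (by positivity))
  · have hwp := hw p hp
    have hratio : ‖fderiv ℝ G p‖ * w p / |G p| ≤ K / c := by
      rw [div_le_div_iff₀ (hpos p hp) hc]
      nlinarith [hK.fderiv_le p hp, hl p hp]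
    calc ‖fderiv ℝ (fun p => |G p| ^ γ) p‖ * w p
        = |γ| * |G p| ^ γ * (‖fderiv ℝ G p‖ * w p / |G p|) := by
          rw [norm_fderiv_abs_rpow γ (hK.hasFDerivAt hp).differentiableAt (abs_pos.1 (hpos p hp))]
          ring
      _ ≤ |γ| * (K₁ * w p ^ (γ * s)) * (K / c) := by
        gcongr
        exact (hbounds p hp).2
      _ ≤ K₁ * (1 + |γ| * (K / c)) * w p ^ (γ * s) := by
        nlinarith [mul_pos hK₁ (Real.rpow_pos_of_pos hwp (γ * s))]

end IsEllipticSymbolOn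

end Symbols

theorem norm_le_two_mul_nrm2 (T : ℝ × ℝ →L[ℝ] ℝ) : ‖T‖ ≤ 2 * nrm2 (T (1, 0), T (0, 1)) := by
  have hnrm := norm_le_nrm2 (T (1, 0), T (0, 1))
  refine T.opNorm_le_bound (mul_nonneg zero_le_two (nrm2_nonneg _)) fun v => ?_
  have hv : T v = v.1 * T (1, 0) + v.2 * T (0, 1) := by
    rw [← smul_eq_mul, ← smul_eq_mul, ← map_smul, ← map_smul, ← map_add]
    simp
  calc ‖T v‖ ≤ ‖v.1‖ * ‖T (1, 0)‖ + ‖v.2‖ * ‖T (0, 1)‖ := by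
        rw [hv, ← norm_mul, ← norm_mul]
        exact norm_add_le _ _
    _ ≤ ‖v‖ * nrm2 (T (1, 0), T (0, 1)) + ‖v‖ * nrm2 (T (1, 0), T (0, 1)) := by
        gcongr
        exacts [norm_fst_le v, (norm_fst_le _).trans hnrm, norm_snd_le v,
          (norm_snd_le _).trans hnrm]
    _ = 2 * nrm2 (T (1, 0), T (0, 1)) * ‖v‖ := by ring

theorem AlphaBound.isSymbolOn {α : ℝ × ℝ → ℝ} {A : ℝ} (h : AlphaBound α A) :
    IsSymbolOn nrm2 {0}ᶜ 0 (2 * A) α := by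
  obtain ⟨hdiff, habs, hgrad⟩ := h
  have hA : 0 ≤ A := (abs_nonneg _).trans (habs 0)
  refine ⟨by positivity, fun p hp => hdiff.contDiffAt (isOpen_compl_singleton.mem_nhds hp),
    fun p _ => ?_, fun p hp => ?_⟩
  all_goals rw [Real.rpow_zero, mul_one]
  · exact (habs p).trans (le_mul_of_one_le_left hA one_le_two)
  · have hp0 := nrm2_pos hp
    calc ‖fderiv ℝ α p‖ * nrm2 p ≤ 2 * (A * (nrm2 p)⁻¹) * nrm2 p := by
          gcongr
          exact (norm_le_two_mul_nrm2 _).trans (by gcongr; exact hgrad p hp)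
      _ = 2 * A := by field_simp

/-! ### Analytic functions near a zero -/

theorem isBigO_norm_pow_of_iteratedFDeriv_eq_zero {𝕜 V F : Type*} [NontriviallyNormedField 𝕜]
    [CharZero 𝕜] [NormedAddCommGroup V] [NormedSpace 𝕜 V] [NormedAddCommGroup F] [NormedSpace 𝕜 F]
    [CompleteSpace F] {f : V → F} {x : V} (hf : AnalyticAt 𝕜 f x) {m : ℕ}
    (hm : ∀ k < m, iteratedFDeriv 𝕜 k f x = 0) :
    (fun y => f (x + y)) =O[𝓝 0] fun y => ‖y‖ ^ m := by
  obtain ⟨p, R, hp⟩ := hf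
  refine (HasFPowerSeriesAt.isBigO_sub_partialSum_pow ⟨R, hp⟩ m).congr_left fun y => ?_
  refine sub_eq_self.2 (Finset.sum_eq_zero fun k hk => ?_)
  have hfactorial := hp.factorial_smul y k
  rw [hm k (Finset.mem_range.1 hk), ← Nat.cast_smul_eq_nsmul 𝕜] at hfactorial
  exact (smul_eq_zero.1 hfactorial).resolve_left (Nat.cast_ne_zero.2 k.factorial_ne_zero)

theorem iteratedFDeriv_eq_zero_of_lt_vanishingOrder {f : ℝ × ℝ → ℝ} {k : ℕ}
    (hk : k < vanishingOrder f) : iteratedFDeriv ℝ k f 0 = 0 :=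
  not_not.1 (Nat.notMem_of_lt_sInf hk)

theorem eventually_disk2_subset {U : Set (ℝ × ℝ)} (hU : U ∈ 𝓝 0) :
    ∀ᶠ R in 𝓝[>] (0 : ℝ), disk2 R ⊆ U := by
  obtain ⟨δ, hδ, hball⟩ := Metric.mem_nhds_iff.1 hU
  filter_upwards [Ioo_mem_nhdsGT hδ] with R hR
  exact (disk2_subset_ball hR.1.le).trans ((Metric.ball_subset_ball hR.2.le).trans hball)

theorem exists_isSymbolOn_disk2 {f : ℝ × ℝ → ℝ} (hf : AnalyticAt ℝ f 0) :
    ∃ K, ∀ᶠ R in 𝓝[>] (0 : ℝ), IsSymbolOn nrm2 (disk2 R) (vanishingOrder f) K f := by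
  set m := vanishingOrder f
  have hfder : ∀ k < m - 1, iteratedFDeriv ℝ k (fderiv ℝ f) 0 = 0 := fun k hk => by
    rw [← norm_eq_zero, norm_iteratedFDeriv_fderiv, norm_eq_zero]
    exact iteratedFDeriv_eq_zero_of_lt_vanishingOrder (by omega)
  obtain ⟨K₁, hK₁, hO₁⟩ := (isBigO_norm_pow_of_iteratedFDeriv_eq_zero hf
    fun _ => iteratedFDeriv_eq_zero_of_lt_vanishingOrder).exists_pos
  obtain ⟨K₂, hK₂, hO₂⟩ :=
    (isBigO_norm_pow_of_iteratedFDeriv_eq_zero hf.fderiv hfder).exists_pos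
  refine ⟨max K₁ K₂, ?_⟩
  filter_upwards [eventually_disk2_subset hf.eventually_analyticAt,
    eventually_disk2_subset hO₁.bound, eventually_disk2_subset hO₂.bound,
    Ioo_mem_nhdsGT one_pos] with R hana hbound hfbound hR
  refine ⟨by positivity, fun p hp => (hana hp).contDiffAt, fun p hp => ?_, fun p hp => ?_⟩
  all_goals rw [Real.rpow_natCast]
  all_goals have hnrm := norm_le_nrm2 p
  · have hp' := hbound hp
    simp only [mem_ofPred_eq, zero_add, norm_pow, norm_norm] at hp'
    refine hp'.trans ?_
    gcongr
    exact le_max_left _ _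
  · have hp' := hfbound hp
    simp only [mem_ofPred_eq, zero_add, norm_pow, norm_norm] at hp'
    have hle_one : nrm2 p ≤ 1 := ((mem_disk2_iff hR.1.le).1 hp).le.trans hR.2.le
    calc ‖fderiv ℝ f p‖ * nrm2 p ≤ K₂ * nrm2 p ^ (m - 1) * nrm2 p := by
          have := nrm2_nonneg p
          gcongr
          exact hp'.trans (by gcongr)
      _ = K₂ * nrm2 p ^ (m - 1 + 1) := by ring
      _ ≤ max K₁ K₂ * nrm2 p ^ m :=
        mul_le_mul (le_max_right _ _)
          (pow_le_pow_of_le_one (nrm2_nonneg p) hle_one (by omega))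
          (pow_nonneg (nrm2_nonneg p) _) (by positivity)

theorem isEllipticSymbolOn_closedSector {f : ℝ × ℝ → ℝ} {m : ℕ} {r R θ₁ θ₂ c K : ℝ}
    (hf : IsSymbolOn nrm2 (disk2 R) m K f) (hr : 0 < r) (hrR : r < R) (hθ : θ₁ < θ₂) (hc : 0 < c)
    (hlow : ∀ p ∈ annularSector 0 r θ₁ θ₂, c * nrm2 p ^ m ≤ |f p|) :
    IsEllipticSymbolOn nrm2 (closedSector r θ₁ θ₂) m f := by
  have hclosure : closure (annularSector 0 r θ₁ θ₂) ⊆ disk2 R := by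
    have : IsClosed {p | nrm2 p ≤ r} := isClosed_le continuous_nrm2 continuous_const
    refine (closure_minimal (fun p hp => ?_) this).trans fun p (hp : nrm2 p ≤ r) =>
      (mem_disk2_iff (hr.le.trans hrR.le)).2 (hp.trans_lt hrR)
    exact (pos_and_le_of_mem_closedSector (annularSector_subset_closedSector hp)).2
  have hsub := closedSector_subset_closure hr hθ
  refine ⟨⟨K, hf.mono_set (hsub.trans hclosure)⟩, c, hc, fun p hp => ?_⟩
  rw [Real.rpow_natCast]
  refine le_on_closure hlow ?_ (fun q hq => ?_) (hsub hp)
  · exact (continuous_const.mul (continuous_nrm2.pow m)).continuousOn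
  · exact (hf.contDiffAt q (hclosure hq)).continuousAt.abs.continuousWithinAt

/-! ### The ball exponent -/

theorem stdFun_nonneg {n : ℕ} (f : Fin n → ℝ × ℝ → ℝ) (γ : Fin n → ℝ) (E : Set (ℝ × ℝ))
    (p : ℝ × ℝ) : 0 ≤ stdFun n f γ E p :=
  indicator_nonneg (fun _ _ => Finset.prod_nonneg fun _ _ => Real.rpow_nonneg (abs_nonneg _) _) p

theorem exponent_le_of_rpow_le {σ ε k c τ₀ : ℝ} {d : ℕ} (hk : 0 < k) (hc : 0 < c) (hτ₀ : 0 < τ₀)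
    (h : ∀ τ : ℝ, 0 < τ → τ < τ₀ → k * τ ^ σ ≤ c * τ ^ ε * |Real.log τ| ^ d) : ε ≤ σ := by
  by_contra! hlt
  have hlog := (isLittleO_abs_log_rpow_rpow_nhdsGT_zero (s := σ - ε) (d : ℝ)
    (sub_neg.2 hlt)).bound (c := k / (2 * c)) (by positivity)
  obtain ⟨τ, hb, hτ0, hτ1⟩ := (hlog.and (Ioo_mem_nhdsGT hτ₀)).exists
  rw [Real.rpow_natCast, Real.norm_of_nonneg (by positivity),
    Real.norm_of_nonneg (by positivity), Real.rpow_sub hτ0] at hb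
  have hσ : 0 < k * τ ^ σ := by positivity
  have : k * τ ^ σ ≤ k * τ ^ σ / 2 :=
    calc k * τ ^ σ ≤ c * τ ^ ε * |Real.log τ| ^ d := h τ hτ0 hτ1
      _ ≤ c * τ ^ ε * (k / (2 * c) * (τ ^ σ / τ ^ ε)) := by gcongr
      _ = k * τ ^ σ / 2 := by field_simp
  linarith

theorem exists_rpow_le_setIntegral_disk2 {g : ℝ × ℝ → ℝ} {s k r θ₁ θ₂ : ℝ} (hg : ∀ p, 0 ≤ g p)
    (hθ : θ₁ < θ₂) (hθ' : θ₂ ≤ θ₁ + 2 * Real.pi) (hk : 0 < k)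
    (hlow : ∀ p ∈ annularSector 0 r θ₁ θ₂, k * nrm2 p ^ s ≤ g p) :
    ∃ k' > 0, ∀ τ : ℝ, 0 < τ → τ < r → IntegrableOn g (disk2 τ) →
      k' * τ ^ (s + 2) ≤ ∫ p in disk2 τ, g p := by
  obtain ⟨k₁, hk₁, _, -, hcomp⟩ := exists_rpow_comparable one_half_pos one_pos s
  have := sub_pos.2 hθ
  refine ⟨k * k₁ * (3 / 8 * (θ₂ - θ₁)), by positivity, fun τ hτ hτr hint => ?_⟩
  have hτ2 : 0 < τ / 2 := half_pos hτ
  have hsub : annularSector (τ / 2) τ θ₁ θ₂ ⊆ disk2 τ := annularSector_subset_disk2 hτ2.le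
  have hvol : volume.real (annularSector (τ / 2) τ θ₁ θ₂) = 3 / 8 * (θ₂ - θ₁) * τ ^ 2 := by
    rw [measureReal_annularSector hθ.le hθ' hτ2.le (half_le_self hτ.le)]
    ring
  have hfin : volume (annularSector (τ / 2) τ θ₁ θ₂) ≠ ⊤ :=
    measure_ne_top_of_subset (hsub.trans (disk2_subset_ball hτ.le)) measure_ball_lt_top.ne
  have hge : ∀ p ∈ annularSector (τ / 2) τ θ₁ θ₂, k * k₁ * τ ^ s ≤ g p := by
    rintro _ ⟨q, ⟨⟨hq, hqτ⟩, hqθ⟩, rfl⟩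
    have hq0 : 0 < q.1 := hτ2.trans hq
    refine le_trans ?_ (hlow _ ⟨q, ⟨⟨hq0, hqτ.trans hτr⟩, hqθ⟩, rfl⟩)
    rw [nrm2_polarCoord_symm hq0.le, mul_assoc]
    gcongr
    exact (hcomp q.1 τ hτ (by linarith) (by linarith)).1
  calc k * k₁ * (3 / 8 * (θ₂ - θ₁)) * τ ^ (s + 2)
      = k * k₁ * τ ^ s * volume.real (annularSector (τ / 2) τ θ₁ θ₂) := by
        rw [hvol, Real.rpow_add hτ, Real.rpow_two]
        ring
    _ ≤ ∫ p in annularSector (τ / 2) τ θ₁ θ₂, g p :=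
        setIntegral_ge_of_const_le_real (measurableSet_annularSector hθ' hτ2.le) hfin hge
          (hint.mono_set hsub)
    _ ≤ ∫ p in disk2 τ, g p :=
        setIntegral_mono_set hint (ae_of_all _ hg) hsub.eventuallyLE

theorem BallBound.exponent_le {g : ℝ × ℝ → ℝ} {ε s k r R θ₁ θ₂ : ℝ} {d : ℕ}
    (hball : BallBound g ε d) (hg : ∀ p, 0 ≤ g p) (hR : 0 < R) (hint : IntegrableOn g (disk2 R))
    (hr : 0 < r) (hθ : θ₁ < θ₂) (hθ' : θ₂ ≤ θ₁ + 2 * Real.pi) (hk : 0 < k)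
    (hlow : ∀ p ∈ annularSector 0 r θ₁ θ₂, k * nrm2 p ^ s ≤ g p) : ε ≤ s + 2 := by
  obtain ⟨-, -, _, -, c₂, hc₂, c₃, hc₃, hgrowth⟩ := hball
  obtain ⟨k', hk', hmass⟩ := exists_rpow_le_setIntegral_disk2 hg hθ hθ' hk hlow
  refine exponent_le_of_rpow_le (d := d) hk' hc₂ (lt_min hr (lt_min hR hc₃)) fun τ hτ hlt => ?_
  obtain ⟨hτr, hτR, hτc⟩ := (lt_min_iff.1 hlt).imp_right lt_min_iff.1
  have hdisk : disk2 τ ⊆ disk2 R := fun p hp =>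
    (mem_disk2_iff hR.le).2 (((mem_disk2_iff hτ.le).1 hp).trans hτR)
  exact (hmass τ hτ hτr (hint.mono_set hdisk)).trans (hgrowth τ hτ hτc).2

/-! ### The Gauss–Green formula on an annular sector -/

/-- The component of the vector `ξ` along `(cos θ, sin θ)`. -/
noncomputable def radialComponent (ξ : ℝ × ℝ) (θ : ℝ) : ℝ := ξ.1 * Real.cos θ + ξ.2 * Real.sin θ

/-- The component of the vector `ξ` along `(-sin θ, cos θ)`. -/
noncomputable def angularComponent (ξ : ℝ × ℝ) (θ : ℝ) : ℝ := ξ.2 * Real.cos θ - ξ.1 * Real.sin θ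

theorem abs_radialComponent_le (ξ : ℝ × ℝ) (θ : ℝ) : |radialComponent ξ θ| ≤ nrm2 ξ :=
  Real.abs_le_sqrt (by
    unfold radialComponent
    nlinarith [sq_nonneg (ξ.1 * Real.sin θ - ξ.2 * Real.cos θ), Real.sin_sq_add_cos_sq θ])

theorem abs_angularComponent_le (ξ : ℝ × ℝ) (θ : ℝ) : |angularComponent ξ θ| ≤ nrm2 ξ :=
  Real.abs_le_sqrt (by
    unfold angularComponent
    nlinarith [sq_nonneg (ξ.1 * Real.cos θ + ξ.2 * Real.sin θ), Real.sin_sq_add_cos_sq θ])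

theorem hasDerivAt_radialComponent (ξ : ℝ × ℝ) (θ : ℝ) :
    HasDerivAt (radialComponent ξ) (angularComponent ξ θ) θ :=
  (((Real.hasDerivAt_cos θ).const_mul ξ.1).add ((Real.hasDerivAt_sin θ).const_mul ξ.2)).congr_deriv
    (by unfold angularComponent; ring)

theorem hasDerivAt_angularComponent (ξ : ℝ × ℝ) (θ : ℝ) :
    HasDerivAt (angularComponent ξ) (-radialComponent ξ θ) θ :=
  (((Real.hasDerivAt_cos θ).const_mul ξ.2).sub ((Real.hasDerivAt_sin θ).const_mul ξ.1)).congr_deriv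
    (by unfold radialComponent; ring)

theorem fderivPolarCoordSymm_apply (q v : ℝ × ℝ) : fderivPolarCoordSymm q v =
    (v.1 * Real.cos q.2 - v.2 * (q.1 * Real.sin q.2),
      v.1 * Real.sin q.2 + v.2 * (q.1 * Real.cos q.2)) := by
  rw [fderivPolarCoordSymm, Matrix.toLin_finTwoProd_toContinuousLinearMap]
  ext <;> simp <;> ring

section GaussGreen

variable {F : Type*} [NormedAddCommGroup F] [NormedSpace ℝ F]

/-- The radial component of the vector field `H ξ` in the `(ρ, θ)`-plane, multiplied by the Jacobian
`ρ`: the `ρ`-derivative of `radialFlux` plus the `θ`-derivative of `angularFlux` is the divergence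
of `H ξ` times `ρ`. -/
noncomputable def radialFlux (H : ℝ × ℝ → F) (ξ q : ℝ × ℝ) : F :=
  (q.1 * radialComponent ξ q.2) • H (polarCoord.symm q)

/-- The angular component of the vector field `H ξ` in the `(ρ, θ)`-plane; the factor `1 / ρ` of
the polar divergence cancels the Jacobian. -/
noncomputable def angularFlux (H : ℝ × ℝ → F) (ξ q : ℝ × ℝ) : F :=
  angularComponent ξ q.2 • H (polarCoord.symm q)

variable {H : ℝ × ℝ → F} {H' : ℝ × ℝ →L[ℝ] F} {q : ℝ × ℝ}

theorem hasFDerivAt_radialFlux (ξ : ℝ × ℝ) (hH : HasFDerivAt H H' (polarCoord.symm q)) :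
    HasFDerivAt (radialFlux H ξ)
      ((q.1 * radialComponent ξ q.2) • H'.comp (fderivPolarCoordSymm q) +
        (q.1 • angularComponent ξ q.2 • ContinuousLinearMap.snd ℝ ℝ ℝ +
          radialComponent ξ q.2 • ContinuousLinearMap.fst ℝ ℝ ℝ).smulRight
            (H (polarCoord.symm q))) q :=
  (hasFDerivAt_fst.mul
    ((hasDerivAt_radialComponent ξ q.2).comp_hasFDerivAt q hasFDerivAt_snd)).smul
      (hH.comp q (hasFDerivAt_polarCoord_symm q))

theorem hasFDerivAt_angularFlux (ξ : ℝ × ℝ) (hH : HasFDerivAt H H' (polarCoord.symm q)) :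
    HasFDerivAt (angularFlux H ξ)
      (angularComponent ξ q.2 • H'.comp (fderivPolarCoordSymm q) +
        (-radialComponent ξ q.2 • ContinuousLinearMap.snd ℝ ℝ ℝ).smulRight
          (H (polarCoord.symm q))) q :=
  ((hasDerivAt_angularComponent ξ q.2).comp_hasFDerivAt q hasFDerivAt_snd).smul
    (hH.comp q (hasFDerivAt_polarCoord_symm q))

theorem fderiv_radialFlux_add_fderiv_angularFlux (ξ : ℝ × ℝ)
    (hH : HasFDerivAt H H' (polarCoord.symm q)) :
    fderiv ℝ (radialFlux H ξ) q (1, 0) + fderiv ℝ (angularFlux H ξ) q (0, 1) = q.1 • H' ξ := by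
  have hξ : radialComponent ξ q.2 • (Real.cos q.2, Real.sin q.2) +
      angularComponent ξ q.2 • (-Real.sin q.2, Real.cos q.2) = ξ := by
    ext
    · simp only [radialComponent, angularComponent, Prod.fst_add, Prod.smul_mk, smul_eq_mul]
      linear_combination ξ.1 * Real.sin_sq_add_cos_sq q.2
    · simp only [radialComponent, angularComponent, Prod.snd_add, Prod.smul_mk, smul_eq_mul]
      linear_combination ξ.2 * Real.sin_sq_add_cos_sq q.2
  rw [(hasFDerivAt_radialFlux ξ hH).fderiv, (hasFDerivAt_angularFlux ξ hH).fderiv]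
  have hθ : fderivPolarCoordSymm q (0, 1) = q.1 • (-Real.sin q.2, Real.cos q.2) := by
    simp [fderivPolarCoordSymm_apply]
  have hρ : fderivPolarCoordSymm q (1, 0) = (Real.cos q.2, Real.sin q.2) := by
    simp [fderivPolarCoordSymm_apply]
  simp only [add_apply, smul_apply,
    ContinuousLinearMap.comp_apply, ContinuousLinearMap.smulRight_apply,
    ContinuousLinearMap.coe_fst', ContinuousLinearMap.coe_snd', hρ, hθ, smul_eq_mul, mul_zero,
    mul_one, zero_add, map_smul, smul_smul, neg_smul]
  conv_rhs => rw [← hξ, map_add, map_smul, map_smul]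
  module

theorem continuousOn_smul_fderiv_polarCoord_symm (ξ : ℝ × ℝ) {S : Set (ℝ × ℝ)}
    (hH : ∀ q ∈ S, ContDiffAt ℝ 1 H (polarCoord.symm q)) :
    ContinuousOn (fun q : ℝ × ℝ => q.1 • fderiv ℝ H (polarCoord.symm q) ξ) S := fun q hq => by
  have : ContinuousAt (fun q => fderiv ℝ H (polarCoord.symm q)) q :=
    ((hH q hq).fderiv_right (m := 0) le_rfl).continuousAt.comp
      continuous_polarCoord_symm.continuousAt
  exact (continuousAt_fst.smul (this.clm_apply continuousAt_const)).continuousWithinAt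

theorem setIntegral_fderiv_polarCoord_symm [CompleteSpace F] (ξ : ℝ × ℝ) {δ r θ₁ θ₂ : ℝ}
    (hδ : δ ≤ r) (hθ : θ₁ ≤ θ₂)
    (hH : ∀ q ∈ Icc δ r ×ˢ Icc θ₁ θ₂, ContDiffAt ℝ 1 H (polarCoord.symm q)) :
    ∫ q in Icc δ r ×ˢ Icc θ₁ θ₂, q.1 • fderiv ℝ H (polarCoord.symm q) ξ =
      (∫ ρ in δ..r, angularFlux H ξ (ρ, θ₂)) - (∫ ρ in δ..r, angularFlux H ξ (ρ, θ₁)) +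
        (∫ θ in θ₁..θ₂, radialFlux H ξ (r, θ)) - ∫ θ in θ₁..θ₂, radialFlux H ξ (δ, θ) := by
  have hderiv : ∀ q ∈ Icc δ r ×ˢ Icc θ₁ θ₂,
      HasFDerivAt H (fderiv ℝ H (polarCoord.symm q)) (polarCoord.symm q) := fun q hq =>
    ((hH q hq).differentiableAt one_ne_zero).hasFDerivAt
  have hrad : ∀ q ∈ Icc δ r ×ˢ Icc θ₁ θ₂, DifferentiableAt ℝ (radialFlux H ξ) q := fun q hq =>
    (hasFDerivAt_radialFlux ξ (hderiv q hq)).differentiableAt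
  have hang : ∀ q ∈ Icc δ r ×ˢ Icc θ₁ θ₂, DifferentiableAt ℝ (angularFlux H ξ) q := fun q hq =>
    (hasFDerivAt_angularFlux ξ (hderiv q hq)).differentiableAt
  have hdiv : EqOn (fun q : ℝ × ℝ => q.1 • fderiv ℝ H (polarCoord.symm q) ξ)
      (fun q => fderiv ℝ (radialFlux H ξ) q (1, 0) + fderiv ℝ (angularFlux H ξ) q (0, 1))
      (Icc δ r ×ˢ Icc θ₁ θ₂) := fun q hq =>
    (fderiv_radialFlux_add_fderiv_angularFlux ξ (hderiv q hq)).symm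
  have hmeas : MeasurableSet (Icc δ r ×ˢ Icc θ₁ θ₂) := measurableSet_Icc.prod measurableSet_Icc
  have hint : IntegrableOn _ (Icc δ r ×ˢ Icc θ₁ θ₂) volume :=
    (continuousOn_smul_fderiv_polarCoord_symm ξ hH).integrableOn_compact
      (isCompact_Icc.prod isCompact_Icc)
  rw [setIntegral_congr_fun hmeas hdiv]
  rw [integrableOn_congr_fun hdiv hmeas] at hint
  rw [Icc_prod_Icc] at *
  have hsub : Ioo δ r ×ˢ Ioo θ₁ θ₂ ⊆ Icc (δ, θ₁) (r, θ₂) := by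
    rw [← Icc_prod_Icc]
    exact prod_mono Ioo_subset_Icc_self Ioo_subset_Icc_self
  exact integral_divergence_prod_Icc_of_hasFDerivAt_of_le _ _ _ _ (δ, θ₁) (r, θ₂) ⟨hδ, hθ⟩
    (fun q hq => (hrad q hq).continuousAt.continuousWithinAt)
    (fun q hq => (hang q hq).continuousAt.continuousWithinAt)
    (fun q hq => (hrad q (hsub hq)).hasFDerivAt) (fun q hq => (hang q (hsub hq)).hasFDerivAt) hint

end GaussGreen

/-! ### Oscillatory integrals of symbols in polar coordinates -/

section PolarRectangle

variable {F : Type*} [NormedAddCommGroup F] [NormedSpace ℝ F] {f : ℝ × ℝ → F} {φ : ℝ → ℝ}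
  {a b θ₁ θ₂ : ℝ}

theorem integrableOn_comp_fst_prod {s t : Set ℝ} (hφ : IntegrableOn φ s) (ht : volume t ≠ ⊤) :
    IntegrableOn (fun q : ℝ × ℝ => φ q.1) (s ×ˢ t) := by
  have : IsFiniteMeasure (volume.restrict t) := isFiniteMeasure_restrict.2 ht
  rw [IntegrableOn, Measure.volume_eq_prod, ← Measure.prod_restrict]
  exact hφ.comp_fst _

theorem norm_setIntegral_prod_le (hab : a ≤ b) (hθ : θ₁ ≤ θ₂)
    (hφ : IntegrableOn φ (Ioc a b)) (hf : ∀ q ∈ Ioc a b ×ˢ Icc θ₁ θ₂, ‖f q‖ ≤ φ q.1) :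
    ‖∫ q in Ioc a b ×ˢ Icc θ₁ θ₂, f q‖ ≤ (θ₂ - θ₁) * ∫ ρ in a..b, φ ρ := by
  have hm : MeasurableSet (Ioc a b ×ˢ Icc θ₁ θ₂) := measurableSet_Ioc.prod measurableSet_Icc
  calc ‖∫ q in Ioc a b ×ˢ Icc θ₁ θ₂, f q‖ ≤ ∫ q in Ioc a b ×ˢ Icc θ₁ θ₂, φ q.1 * 1 := by
        simp only [mul_one]
        exact norm_integral_le_of_norm_le
          (integrableOn_comp_fst_prod hφ measure_Icc_lt_top.ne)
          ((ae_restrict_iff' hm).2 (ae_of_all _ hf))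
    _ = (∫ ρ in Ioc a b, φ ρ) * ∫ _θ in Icc θ₁ θ₂, (1 : ℝ) := by
        rw [Measure.volume_eq_prod]
        exact setIntegral_prod_mul φ (fun _ => (1 : ℝ)) _ _
    _ = (θ₂ - θ₁) * ∫ ρ in a..b, φ ρ := by
        rw [intervalIntegral.integral_of_le hab, setIntegral_const, Real.volume_real_Icc_of_le hθ,
          smul_eq_mul, mul_one, mul_comm]

end PolarRectangle

/-- The product of the amplitude `G` and the character `p ↦ exp (i ξ·p)`. -/
noncomputable def modulated (G : ℝ × ℝ → ℝ) (ξ p : ℝ × ℝ) : ℂ :=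
  (G p : ℂ) * Complex.exp (Complex.I * ((ξ.1 : ℂ) * (p.1 : ℂ) + (ξ.2 : ℂ) * (p.2 : ℂ)))

section Modulated

variable {G : ℝ × ℝ → ℝ} {ξ p : ℝ × ℝ}

theorem norm_modulated (G : ℝ × ℝ → ℝ) (ξ p : ℝ × ℝ) : ‖modulated G ξ p‖ = |G p| := by
  rw [modulated, norm_mul, mul_comm Complex.I]
  norm_cast
  rw [Complex.norm_exp_ofReal_mul_I, mul_one, Real.norm_eq_abs]

theorem contDiffAt_modulated (hG : ContDiffAt ℝ 1 G p) : ContDiffAt ℝ 1 (modulated G ξ) p := by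
  have h : ContDiff ℝ 1 fun x : ℝ => (x : ℂ) := Complex.ofRealCLM.contDiff
  unfold modulated
  fun_prop

theorem continuousAt_modulated (hG : ContinuousAt G p) : ContinuousAt (modulated G ξ) p := by
  unfold modulated
  fun_prop

theorem fderiv_modulated_self (hG : DifferentiableAt ℝ G p) :
    fderiv ℝ (modulated G ξ) p ξ =
      modulated (fun p => fderiv ℝ G p ξ) ξ p + nrm2 ξ ^ 2 • (Complex.I * modulated G ξ p) := by
  let phase : ℝ × ℝ →L[ℝ] ℂ := Complex.I • Complex.ofRealCLM.comp
    (ξ.1 • ContinuousLinearMap.fst ℝ ℝ ℝ + ξ.2 • ContinuousLinearMap.snd ℝ ℝ ℝ)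
  have hphase : ∀ q, phase q = Complex.I * ((ξ.1 : ℂ) * (q.1 : ℂ) + (ξ.2 : ℂ) * (q.2 : ℂ)) :=
    fun q => by simp [phase, mul_add]
  have hself : phase ξ = Complex.I * (nrm2 ξ ^ 2 : ℝ) := by
    rw [hphase, nrm2_sq]
    push_cast
    ring
  have hmod : modulated G ξ = fun q => (G q : ℂ) * Complex.exp (phase q) :=
    funext fun q => by rw [modulated, hphase]
  have hderiv : HasFDerivAt (fun q => (G q : ℂ) * Complex.exp (phase q))
      ((G p : ℂ) • Complex.exp (phase p) • phase +
        Complex.exp (phase p) • Complex.ofRealCLM.comp (fderiv ℝ G p)) p :=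
    (Complex.ofRealCLM.hasFDerivAt.comp p hG.hasFDerivAt).mul phase.hasFDerivAt.cexp
  rw [hmod, hderiv.fderiv]
  simp only [add_apply, smul_apply, ContinuousLinearMap.comp_apply, Complex.ofRealCLM_apply,
    smul_eq_mul, hself, modulated, hphase, Complex.real_smul]
  ring

end Modulated

section Sector

variable {G : ℝ × ℝ → ℝ} {K ε r θ₁ θ₂ δ : ℝ} {q : ℝ × ℝ}

theorem polarCoord_symm_mem_closedSector (hq : q ∈ Ioc 0 r ×ˢ Icc θ₁ θ₂) :
    polarCoord.symm q ∈ closedSector r θ₁ θ₂ := mem_image_of_mem _ hq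

theorem continuousOn_modulated_polarCoord_symm {S : Set (ℝ × ℝ)}
    (hG : ∀ q ∈ S, ContinuousAt G (polarCoord.symm q)) (ξ : ℝ × ℝ) :
    ContinuousOn (fun q : ℝ × ℝ => q.1 • modulated G ξ (polarCoord.symm q)) S := fun q hq =>
  (continuousAt_fst.smul ((continuousAt_modulated (hG q hq)).comp
    continuous_polarCoord_symm.continuousAt)).continuousWithinAt

theorem norm_smul_modulated_polarCoord_symm_le
    (hG : IsSymbolOn nrm2 (closedSector r θ₁ θ₂) (ε - 2) K G) (ξ : ℝ × ℝ)
    (hq : q ∈ Ioc 0 r ×ˢ Icc θ₁ θ₂) :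
    ‖q.1 • modulated G ξ (polarCoord.symm q)‖ ≤ K * q.1 ^ (ε - 1) := by
  have hq0 : 0 < q.1 := hq.1.1
  have hG' := hG.abs_le _ (polarCoord_symm_mem_closedSector hq)
  rw [nrm2_polarCoord_symm hq0.le] at hG'
  rw [norm_smul, norm_modulated, Real.norm_of_nonneg hq0.le,
    show ε - 1 = ε - 2 + 1 by ring, Real.rpow_add_one hq0.ne']
  calc q.1 * |G (polarCoord.symm q)| ≤ q.1 * (K * q.1 ^ (ε - 2)) := by gcongr
    _ = K * (q.1 ^ (ε - 2) * q.1) := by ring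

theorem integrableOn_modulated_polarCoord_symm (hε : 0 < ε) (hr : 0 ≤ r)
    (hG : IsSymbolOn nrm2 (closedSector r θ₁ θ₂) (ε - 2) K G) (ξ : ℝ × ℝ) :
    IntegrableOn (fun q : ℝ × ℝ => q.1 • modulated G ξ (polarCoord.symm q))
      (Ioc 0 r ×ˢ Icc θ₁ θ₂) := by
  have hm : MeasurableSet (Ioc 0 r ×ˢ Icc θ₁ θ₂) := measurableSet_Ioc.prod measurableSet_Icc
  have hpow : IntegrableOn (fun ρ : ℝ => K * ρ ^ (ε - 1)) (Ioc 0 r) :=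
    (intervalIntegrable_iff_integrableOn_Ioc_of_le hr).1
      ((intervalIntegral.intervalIntegrable_rpow' (by linarith)).const_mul K)
  exact Integrable.mono' (integrableOn_comp_fst_prod hpow measure_Icc_lt_top.ne)
    ((continuousOn_modulated_polarCoord_symm (fun _ hq => (hG.contDiffAt _
      (polarCoord_symm_mem_closedSector hq)).continuousAt) ξ).aestronglyMeasurable hm)
    ((ae_restrict_iff' hm).2 (ae_of_all _ fun _ => norm_smul_modulated_polarCoord_symm_le hG ξ))

theorem norm_setIntegral_modulated_inner_le (hε : 0 < ε) (hθ : θ₁ ≤ θ₂) (hδ : 0 ≤ δ) (hδr : δ ≤ r)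
    (hG : IsSymbolOn nrm2 (closedSector r θ₁ θ₂) (ε - 2) K G) (ξ : ℝ × ℝ) :
    ‖∫ q in Ioc 0 δ ×ˢ Icc θ₁ θ₂, q.1 • modulated G ξ (polarCoord.symm q)‖ ≤
      K * ((θ₂ - θ₁) / ε) * δ ^ ε := by
  have hpow : IntegrableOn (fun ρ : ℝ => K * ρ ^ (ε - 1)) (Ioc 0 δ) :=
    (intervalIntegrable_iff_integrableOn_Ioc_of_le hδ).1
      ((intervalIntegral.intervalIntegrable_rpow' (by linarith)).const_mul K)
  refine (norm_setIntegral_prod_le hδ hθ hpow fun _ hq =>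
    norm_smul_modulated_polarCoord_symm_le hG ξ
      ⟨Ioc_subset_Ioc_right hδr hq.1, hq.2⟩).trans_eq ?_
  rw [intervalIntegral.integral_const_mul, integral_rpow (Or.inl (by linarith)), sub_add_cancel,
    Real.zero_rpow hε.ne']
  ring

end Sector

section IntegrationByParts

variable {G : ℝ × ℝ → ℝ} {K ε r θ₁ θ₂ δ ρ θ : ℝ} {q : ℝ × ℝ}

theorem norm_radialFlux_modulated_le
    (hG : IsSymbolOn nrm2 (closedSector r θ₁ θ₂) (ε - 2) K G) (ξ : ℝ × ℝ)
    (hq : q ∈ Ioc 0 r ×ˢ Icc θ₁ θ₂) :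
    ‖radialFlux (modulated G ξ) ξ q‖ ≤ nrm2 ξ * (K * q.1 ^ (ε - 1)) := by
  rw [radialFlux, mul_comm, mul_smul, norm_smul]
  exact mul_le_mul (abs_radialComponent_le ξ q.2)
    (norm_smul_modulated_polarCoord_symm_le hG ξ hq) (norm_nonneg _) (nrm2_nonneg ξ)

theorem norm_angularFlux_modulated_le
    (hG : IsSymbolOn nrm2 (closedSector r θ₁ θ₂) (ε - 2) K G) (ξ : ℝ × ℝ)
    (hq : q ∈ Ioc 0 r ×ˢ Icc θ₁ θ₂) :
    ‖angularFlux (modulated G ξ) ξ q‖ ≤ nrm2 ξ * (K * q.1 ^ (ε - 2)) := by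
  have hG' := hG.abs_le _ (polarCoord_symm_mem_closedSector hq)
  rw [nrm2_polarCoord_symm hq.1.1.le, ← norm_modulated G ξ] at hG'
  rw [angularFlux, norm_smul]
  exact mul_le_mul (abs_angularComponent_le ξ q.2) hG' (norm_nonneg _) (nrm2_nonneg ξ)

theorem norm_smul_modulated_fderiv_polarCoord_symm_le
    (hG : IsSymbolOn nrm2 (closedSector r θ₁ θ₂) (ε - 2) K G) (ξ : ℝ × ℝ)
    (hq : q ∈ Ioc 0 r ×ˢ Icc θ₁ θ₂) :
    ‖q.1 • modulated (fun p => fderiv ℝ G p ξ) ξ (polarCoord.symm q)‖ ≤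
      nrm2 ξ * (K * q.1 ^ (ε - 2)) := by
  have hq0 : 0 < q.1 := hq.1.1
  have hG' := hG.fderiv_le _ (polarCoord_symm_mem_closedSector hq)
  rw [nrm2_polarCoord_symm hq0.le] at hG'
  rw [norm_smul, norm_modulated, Real.norm_of_nonneg hq0.le]
  calc q.1 * |fderiv ℝ G (polarCoord.symm q) ξ|
      ≤ q.1 * (‖fderiv ℝ G (polarCoord.symm q)‖ * nrm2 ξ) := by
        gcongr
        exact (fderiv ℝ G _).le_opNorm_of_le (norm_le_nrm2 ξ)
    _ = nrm2 ξ * (‖fderiv ℝ G (polarCoord.symm q)‖ * q.1) := by ring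
    _ ≤ nrm2 ξ * (K * q.1 ^ (ε - 2)) := mul_le_mul_of_nonneg_left hG' (nrm2_nonneg ξ)

theorem intervalIntegrable_rpow_of_pos (hδ : 0 < δ) (hδr : δ ≤ r) (s : ℝ) :
    IntervalIntegrable (fun ρ : ℝ => ρ ^ s) volume δ r :=
  intervalIntegral.intervalIntegrable_rpow (Or.inr fun h => by
    rw [uIcc_of_le hδr] at h
    exact hδ.not_ge h.1)

theorem norm_integral_radialFlux_modulated_le (hθ : θ₁ ≤ θ₂)
    (hG : IsSymbolOn nrm2 (closedSector r θ₁ θ₂) (ε - 2) K G) (ξ : ℝ × ℝ) (hρ : ρ ∈ Ioc 0 r) :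
    ‖∫ θ in θ₁..θ₂, radialFlux (modulated G ξ) ξ (ρ, θ)‖ ≤
      nrm2 ξ * (K * ((θ₂ - θ₁) * ρ ^ (ε - 1))) := by
  have hbound : ∀ θ ∈ uIoc θ₁ θ₂,
      ‖radialFlux (modulated G ξ) ξ (ρ, θ)‖ ≤ nrm2 ξ * (K * ρ ^ (ε - 1)) := fun θ h =>
    norm_radialFlux_modulated_le hG ξ ⟨hρ, Ioc_subset_Icc_self (uIoc_of_le hθ ▸ h)⟩
  refine (intervalIntegral.norm_integral_le_of_norm_le_const hbound).trans_eq ?_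
  rw [abs_of_nonneg (sub_nonneg.2 hθ)]
  ring

theorem norm_integral_angularFlux_modulated_le (hδ : 0 < δ) (hδr : δ ≤ r)
    (hG : IsSymbolOn nrm2 (closedSector r θ₁ θ₂) (ε - 2) K G) (ξ : ℝ × ℝ) (hθ : θ ∈ Icc θ₁ θ₂) :
    ‖∫ ρ in δ..r, angularFlux (modulated G ξ) ξ (ρ, θ)‖ ≤
      nrm2 ξ * (K * ∫ ρ in δ..r, ρ ^ (ε - 2)) := by
  rw [← intervalIntegral.integral_const_mul, ← intervalIntegral.integral_const_mul]
  exact intervalIntegral.norm_integral_le_of_norm_le hδr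
    (ae_of_all _ fun ρ hρ => norm_angularFlux_modulated_le hG ξ (q := (ρ, θ))
      ⟨Ioc_subset_Ioc_left hδ.le hρ, hθ⟩)
    (((intervalIntegrable_rpow_of_pos hδ hδr _).const_mul K).const_mul _)

theorem norm_setIntegral_modulated_fderiv_le (hθ : θ₁ ≤ θ₂) (hδ : 0 < δ) (hδr : δ ≤ r)
    (hG : IsSymbolOn nrm2 (closedSector r θ₁ θ₂) (ε - 2) K G) (ξ : ℝ × ℝ) :
    ‖∫ q in Ioc δ r ×ˢ Icc θ₁ θ₂,
        q.1 • modulated (fun p => fderiv ℝ G p ξ) ξ (polarCoord.symm q)‖ ≤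
      nrm2 ξ * (K * ((θ₂ - θ₁) * ∫ ρ in δ..r, ρ ^ (ε - 2))) := by
  refine (norm_setIntegral_prod_le hδr hθ ((intervalIntegrable_iff_integrableOn_Ioc_of_le hδr).1
    (((intervalIntegrable_rpow_of_pos hδ hδr _).const_mul K).const_mul _)) fun q hq =>
      norm_smul_modulated_fderiv_polarCoord_symm_le hG ξ
        ⟨Ioc_subset_Ioc_left hδ.le hq.1, hq.2⟩).trans_eq ?_
  rw [intervalIntegral.integral_const_mul, intervalIntegral.integral_const_mul]
  ring

theorem nrm2_sq_smul_setIntegral_modulated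
    (hG : ∀ q ∈ Icc δ r ×ˢ Icc θ₁ θ₂, ContDiffAt ℝ 1 G (polarCoord.symm q)) (ξ : ℝ × ℝ) :
    nrm2 ξ ^ 2 • (Complex.I * ∫ q in Ioc δ r ×ˢ Icc θ₁ θ₂,
        q.1 • modulated G ξ (polarCoord.symm q)) =
      (∫ q in Icc δ r ×ˢ Icc θ₁ θ₂, q.1 • fderiv ℝ (modulated G ξ) (polarCoord.symm q) ξ) -
        ∫ q in Ioc δ r ×ˢ Icc θ₁ θ₂,
          q.1 • modulated (fun p => fderiv ℝ G p ξ) ξ (polarCoord.symm q) := by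
  have hIoc : (Icc δ r ×ˢ Icc θ₁ θ₂ : Set (ℝ × ℝ)) =ᵐ[volume] Ioc δ r ×ˢ Icc θ₁ θ₂ :=
    Measure.set_prod_ae_eq Ioc_ae_eq_Icc.symm (ae_eq_refl _)
  have hm : MeasurableSet (Icc δ r ×ˢ Icc θ₁ θ₂) := measurableSet_Icc.prod measurableSet_Icc
  have hcompact : IsCompact (Icc δ r ×ˢ Icc θ₁ θ₂) := isCompact_Icc.prod isCompact_Icc
  rw [← setIntegral_congr_set hIoc, ← setIntegral_congr_set hIoc, ← integral_const_mul,
    ← integral_smul, ← integral_sub]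
  · refine setIntegral_congr_fun hm fun q hq => ?_
    simp only [fderiv_modulated_self ((hG q hq).differentiableAt one_ne_zero), smul_add,
      mul_smul_comm, add_sub_cancel_left]
    rw [smul_comm]
  · exact (continuousOn_smul_fderiv_polarCoord_symm ξ fun q hq =>
      contDiffAt_modulated (hG q hq)).integrableOn_compact hcompact
  · exact (continuousOn_modulated_polarCoord_symm (fun q hq =>
      (((hG q hq).fderiv_right (m := 0) le_rfl).continuousAt.clm_apply
        continuousAt_const)) ξ).integrableOn_compact hcompact

theorem nrm2_mul_norm_setIntegral_modulated_outer_le (hθ : θ₁ ≤ θ₂) (hδ : 0 < δ) (hδr : δ ≤ r)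
    (hG : IsSymbolOn nrm2 (closedSector r θ₁ θ₂) (ε - 2) K G) (ξ : ℝ × ℝ) :
    nrm2 ξ * ‖∫ q in Ioc δ r ×ˢ Icc θ₁ θ₂, q.1 • modulated G ξ (polarCoord.symm q)‖ ≤
      K * ((θ₂ - θ₁) * (r ^ (ε - 1) + δ ^ (ε - 1)) +
        (2 + (θ₂ - θ₁)) * ∫ ρ in δ..r, ρ ^ (ε - 2)) := by
  have hJ : 0 ≤ ∫ ρ in δ..r, ρ ^ (ε - 2) :=
    intervalIntegral.integral_nonneg hδr fun ρ h => Real.rpow_nonneg (hδ.le.trans h.1) _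
  have hr : 0 < r := hδ.trans_le hδr
  have hcont : ∀ q ∈ Icc δ r ×ˢ Icc θ₁ θ₂, ContDiffAt ℝ 1 G (polarCoord.symm q) := fun q hq =>
    hG.contDiffAt _ (polarCoord_symm_mem_closedSector ⟨⟨hδ.trans_le hq.1.1, hq.1.2⟩, hq.2⟩)
  rcases (nrm2_nonneg ξ).eq_or_lt with hξ | hξ
  · have := hG.nonneg
    have := sub_nonneg.2 hθ
    rw [← hξ, zero_mul]
    positivity
  refine le_of_mul_le_mul_left ?_ hξ
  calc nrm2 ξ * (nrm2 ξ * ‖∫ q in Ioc δ r ×ˢ Icc θ₁ θ₂, q.1 • modulated G ξ (polarCoord.symm q)‖)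
      = ‖nrm2 ξ ^ 2 • (Complex.I * ∫ q in Ioc δ r ×ˢ Icc θ₁ θ₂,
          q.1 • modulated G ξ (polarCoord.symm q))‖ := by
        rw [norm_smul, norm_mul, Complex.norm_I, one_mul, norm_pow, Real.norm_of_nonneg hξ.le]
        ring
    _ ≤ nrm2 ξ * (K * ∫ ρ in δ..r, ρ ^ (ε - 2)) + nrm2 ξ * (K * ∫ ρ in δ..r, ρ ^ (ε - 2)) +
          nrm2 ξ * (K * ((θ₂ - θ₁) * r ^ (ε - 1))) + nrm2 ξ * (K * ((θ₂ - θ₁) * δ ^ (ε - 1))) +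
          nrm2 ξ * (K * ((θ₂ - θ₁) * ∫ ρ in δ..r, ρ ^ (ε - 2))) := by
        rw [nrm2_sq_smul_setIntegral_modulated hcont ξ, setIntegral_fderiv_polarCoord_symm ξ hδr hθ
          fun q hq => contDiffAt_modulated (hcont q hq)]
        exact norm_sub_le_of_le (norm_sub_le_of_le (norm_add_le_of_le (norm_sub_le_of_le
          (norm_integral_angularFlux_modulated_le hδ hδr hG ξ (right_mem_Icc.2 hθ))
          (norm_integral_angularFlux_modulated_le hδ hδr hG ξ (left_mem_Icc.2 hθ)))
          (norm_integral_radialFlux_modulated_le hθ hG ξ ⟨hr, le_rfl⟩))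
          (norm_integral_radialFlux_modulated_le hθ hG ξ ⟨hδ, hδr⟩))
          (norm_setIntegral_modulated_fderiv_le hθ hδ hδr hG ξ)
    _ = nrm2 ξ * (K * ((θ₂ - θ₁) * (r ^ (ε - 1) + δ ^ (ε - 1)) +
          (2 + (θ₂ - θ₁)) * ∫ ρ in δ..r, ρ ^ (ε - 2))) := by ring

theorem norm_setIntegral_modulated_outer_le (hθ : θ₁ ≤ θ₂) (hδ : 0 < δ) (hδr : δ ≤ r)
    (hG : IsSymbolOn nrm2 (closedSector r θ₁ θ₂) (ε - 2) K G) (ξ : ℝ × ℝ) :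
    ‖∫ q in Ioc δ r ×ˢ Icc θ₁ θ₂, q.1 • modulated G ξ (polarCoord.symm q)‖ ≤
      K * ((θ₂ - θ₁) * (r * ∫ ρ in δ..r, ρ ^ (ε - 2))) := by
  have hK := hG.nonneg
  refine (norm_setIntegral_prod_le hδr hθ ((intervalIntegrable_iff_integrableOn_Ioc_of_le hδr).1
    (((intervalIntegrable_rpow_of_pos hδ hδr (ε - 2)).const_mul (K * r)))) fun q hq => ?_).trans_eq
      (by rw [intervalIntegral.integral_const_mul]; ring)
  have hq0 : 0 < q.1 := hδ.trans hq.1.1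
  calc ‖q.1 • modulated G ξ (polarCoord.symm q)‖
      ≤ K * q.1 ^ (ε - 1) := norm_smul_modulated_polarCoord_symm_le hG ξ
        ⟨Ioc_subset_Ioc_left hδ.le hq.1, hq.2⟩
    _ = K * q.1 * q.1 ^ (ε - 2) := by
        rw [show ε - 1 = ε - 2 + 1 by ring, Real.rpow_add_one hq0.ne']
        ring
    _ ≤ K * r * q.1 ^ (ε - 2) := by
        gcongr
        exact hq.1.2

end IntegrationByParts

/-! ### Cutting off at the wavelength -/

/-- The bound obtained by cutting a sector of radius `r` at the radius `δ`, up to a constant: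
`δ ^ ε` is the mass of the inner part, and the remaining terms come from integrating by parts in
the outer part, with `δ` comparable to the wavelength `|(t, u)|⁻¹`. -/
noncomputable def cutoffBound (ε r δ : ℝ) : ℝ :=
  δ ^ ε + δ * (r ^ (ε - 1) + ∫ ρ in δ..r, ρ ^ (ε - 2))

/-- The rate of decay of the oscillatory integral, up to a logarithmic factor `(log L) ^ d`. -/
noncomputable def decayRate (ε L : ℝ) : ℝ :=
  if ε < 1 then L ^ (-ε) else if ε = 1 then L ^ (-1 : ℝ) * Real.log L else L ^ (-1 : ℝ)

theorem rpow_eq_mul_rpow_sub_one {x : ℝ} (hx : x ≠ 0) (y : ℝ) : x ^ y = x * x ^ (y - 1) := by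
  rw [Real.rpow_sub_one hx, mul_div_cancel₀ _ hx]

section Sector

variable {G : ℝ × ℝ → ℝ} {K ε r θ₁ θ₂ δ : ℝ}

theorem oscInt_annularSector_eq_add (hε : 0 < ε) (hδ : 0 ≤ δ) (hδr : δ ≤ r)
    (hθ : θ₂ ≤ θ₁ + 2 * Real.pi) (hG : IsSymbolOn nrm2 (closedSector r θ₁ θ₂) (ε - 2) K G)
    (t u : ℝ) :
    oscInt G (annularSector 0 r θ₁ θ₂) t u =
      (∫ q in Ioc 0 δ ×ˢ Icc θ₁ θ₂, q.1 • modulated G (t, u) (polarCoord.symm q)) +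
        ∫ q in Ioc δ r ×ˢ Icc θ₁ θ₂, q.1 • modulated G (t, u) (polarCoord.symm q) := by
  have hIoo : (Ioo 0 r ×ˢ Ioo θ₁ θ₂ : Set (ℝ × ℝ)) =ᵐ[volume] Ioc 0 r ×ˢ Icc θ₁ θ₂ :=
    Measure.set_prod_ae_eq Ioo_ae_eq_Ioc Ioo_ae_eq_Icc
  have hunion : Ioc 0 r ×ˢ Icc θ₁ θ₂ = Ioc 0 δ ×ˢ Icc θ₁ θ₂ ∪ Ioc δ r ×ˢ Icc θ₁ θ₂ := by
    rw [← union_prod, Ioc_union_Ioc_eq_Ioc hδ hδr]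
  have hint := integrableOn_modulated_polarCoord_symm hε (hδ.trans hδr) hG (t, u)
  rw [hunion] at hint
  calc oscInt G (annularSector 0 r θ₁ θ₂) t u
      = ∫ p in annularSector 0 r θ₁ θ₂, modulated G (t, u) p := rfl
    _ = ∫ q in Ioc 0 r ×ˢ Icc θ₁ θ₂, q.1 • modulated G (t, u) (polarCoord.symm q) := by
        rw [setIntegral_annularSector hθ le_rfl, setIntegral_congr_set hIoo]
    _ = _ := by
        rw [hunion, setIntegral_union
          (Disjoint.set_prod_left (Ioc_disjoint_Ioc_of_le le_rfl) _ _)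
          (measurableSet_Ioc.prod measurableSet_Icc) hint.left_of_union hint.right_of_union]

theorem norm_setIntegral_modulated_outer_le_cutoffBound (hθ : θ₁ ≤ θ₂) (hδ : 0 < δ) (hδr : δ ≤ r)
    (hG : IsSymbolOn nrm2 (closedSector r θ₁ θ₂) (ε - 2) K G) {ξ : ℝ × ℝ}
    (hξ : δ * (2 + nrm2 ξ) = 2 * r) :
    ‖∫ q in Ioc δ r ×ˢ Icc θ₁ θ₂, q.1 • modulated G ξ (polarCoord.symm q)‖ ≤
      K * ((2 + (θ₂ - θ₁) + 2 * r * (θ₂ - θ₁)) / (2 * r)) * cutoffBound ε r δ := by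
  set O := ‖∫ q in Ioc δ r ×ˢ Icc θ₁ θ₂, q.1 • modulated G ξ (polarCoord.symm q)‖
  set J := ∫ ρ in δ..r, ρ ^ (ε - 2) with hJ
  set Θ := θ₂ - θ₁
  have hr : 0 < r := hδ.trans_le hδr
  have : 0 ≤ Θ := sub_nonneg.2 hθ
  have hK := hG.nonneg
  have hL : 0 < 2 + nrm2 ξ := by linarith [nrm2_nonneg ξ]
  have hle : Θ ≤ 2 + Θ + 2 * r * Θ := by nlinarith
  have hsum : (2 + nrm2 ξ) * O ≤
      K * (Θ * (r ^ (ε - 1) + δ ^ (ε - 1)) + (2 + Θ + 2 * r * Θ) * J) := by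
    linarith [norm_setIntegral_modulated_outer_le hθ hδ hδr hG ξ,
      nrm2_mul_norm_setIntegral_modulated_outer_le hθ hδ hδr hG ξ]
  calc O = δ / (2 * r) * ((2 + nrm2 ξ) * O) := by
        rw [← hξ]
        field_simp
    _ ≤ δ / (2 * r) * (K * ((2 + Θ + 2 * r * Θ) * (r ^ (ε - 1) + δ ^ (ε - 1)) +
          (2 + Θ + 2 * r * Θ) * J)) := by
        refine mul_le_mul_of_nonneg_left (hsum.trans ?_) (by positivity)
        gcongr
    _ = K * ((2 + Θ + 2 * r * Θ) / (2 * r)) * cutoffBound ε r δ := by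
        rw [cutoffBound, rpow_eq_mul_rpow_sub_one hδ.ne' ε, ← hJ]
        ring

theorem norm_oscInt_annularSector_le (hε : 0 < ε) (hr : 0 < r)
    (hθ : θ₁ ≤ θ₂) (hθ' : θ₂ ≤ θ₁ + 2 * Real.pi)
    (hG : IsSymbolOn nrm2 (closedSector r θ₁ θ₂) (ε - 2) K G) (t u : ℝ) :
    ‖oscInt G (annularSector 0 r θ₁ θ₂) t u‖ ≤
      K * ((θ₂ - θ₁) / ε + (2 + (θ₂ - θ₁) + 2 * r * (θ₂ - θ₁)) / (2 * r)) *
        cutoffBound ε r (2 * r / (2 + nrm2 (t, u))) := by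
  have hL : 2 ≤ 2 + nrm2 (t, u) := le_add_of_nonneg_right (nrm2_nonneg _)
  set L := 2 + nrm2 (t, u)
  set δ := 2 * r / L with hδdef
  have hδ : 0 < δ := by positivity
  have hδr : δ ≤ r := by
    rw [hδdef, div_le_iff₀ (by positivity)]
    nlinarith
  have hδL : δ * L = 2 * r := div_mul_cancel₀ _ (by positivity)
  have hle : δ ^ ε ≤ cutoffBound ε r δ :=
    have : 0 ≤ ∫ ρ in δ..r, ρ ^ (ε - 2) :=
      intervalIntegral.integral_nonneg hδr fun ρ h => Real.rpow_nonneg (hδ.le.trans h.1) _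
    le_add_of_nonneg_right (by positivity)
  rw [oscInt_annularSector_eq_add hε hδ.le hδr hθ' hG, mul_add, add_mul]
  refine norm_add_le_of_le ((norm_setIntegral_modulated_inner_le hε hθ hδ.le hδr hG _).trans ?_)
    (norm_setIntegral_modulated_outer_le_cutoffBound hθ hδ hδr hG hδL)
  have := mul_nonneg hG.nonneg (div_nonneg (sub_nonneg.2 hθ) hε.le)
  gcongr

end Sector

section Rates

variable {ε r δ : ℝ}

theorem integral_rpow_sub_two (hε : ε ≠ 1) (hδ : 0 < δ) (hδr : δ ≤ r) :
    ∫ ρ in δ..r, ρ ^ (ε - 2) = (r ^ (ε - 1) - δ ^ (ε - 1)) / (ε - 1) := by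
  rw [integral_rpow (Or.inr ⟨fun h => hε (by linarith), fun h => hδ.not_ge
    (uIcc_of_le hδr ▸ h).1⟩), show ε - 2 + 1 = ε - 1 by ring]

theorem cutoffBound_le_of_lt_one (hε : ε < 1) (hδ : 0 < δ) (hδr : δ ≤ r) :
    cutoffBound ε r δ ≤ (2 + (1 - ε)⁻¹) * δ ^ ε := by
  have : 0 < 1 - ε := sub_pos.2 hε
  have hr : 0 < r := hδ.trans_le hδr
  have hrδ : r ^ (ε - 1) ≤ δ ^ (ε - 1) :=
    Real.rpow_le_rpow_of_nonpos hδ hδr (by linarith)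
  have hJ : ∫ ρ in δ..r, ρ ^ (ε - 2) ≤ (1 - ε)⁻¹ * δ ^ (ε - 1) := by
    rw [integral_rpow_sub_two hε.ne hδ hδr, ← neg_div_neg_eq, neg_sub, neg_sub, inv_mul_eq_div]
    gcongr
    exact sub_le_self _ (by positivity)
  calc cutoffBound ε r δ ≤ δ ^ ε + δ * (δ ^ (ε - 1) + (1 - ε)⁻¹ * δ ^ (ε - 1)) := by
        unfold cutoffBound
        gcongr
    _ = (2 + (1 - ε)⁻¹) * δ ^ ε := by
        rw [rpow_eq_mul_rpow_sub_one hδ.ne' ε]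
        ring

theorem cutoffBound_one (hδ : 0 < δ) (hδr : δ ≤ r) :
    cutoffBound 1 r δ = δ * (2 + Real.log (r / δ)) := by
  have hJ : ∫ ρ in δ..r, ρ ^ ((1 : ℝ) - 2) = Real.log (r / δ) := by
    rw [show (1 : ℝ) - 2 = -1 by norm_num, ← integral_inv_of_pos hδ (hδ.trans_le hδr)]
    simp only [Real.rpow_neg_one]
  rw [cutoffBound, hJ, sub_self, Real.rpow_zero, Real.rpow_one]
  ring

theorem cutoffBound_le_of_one_lt (hε : 1 < ε) (hδ : 0 < δ) (hδr : δ ≤ r) :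
    cutoffBound ε r δ ≤ (2 + (ε - 1)⁻¹) * r ^ (ε - 1) * δ := by
  have : 0 < ε - 1 := sub_pos.2 hε
  have hJ : ∫ ρ in δ..r, ρ ^ (ε - 2) ≤ (ε - 1)⁻¹ * r ^ (ε - 1) := by
    rw [integral_rpow_sub_two hε.ne' hδ hδr, inv_mul_eq_div]
    gcongr
    exact sub_le_self _ (by positivity)
  calc cutoffBound ε r δ
      ≤ δ * r ^ (ε - 1) + δ * (r ^ (ε - 1) + (ε - 1)⁻¹ * r ^ (ε - 1)) := by
        rw [cutoffBound, rpow_eq_mul_rpow_sub_one hδ.ne' ε]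
        gcongr
    _ = (2 + (ε - 1)⁻¹) * r ^ (ε - 1) * δ := by ring

theorem one_le_two_mul_log {L : ℝ} (hL : 2 ≤ L) : 1 ≤ 2 * Real.log L := by
  linarith [Real.log_two_gt_d9, Real.log_le_log two_pos hL]

theorem exists_cutoffBound_le_decayRate (ε : ℝ) (hr : 0 < r) :
    ∃ C > 0, ∀ L : ℝ, 2 ≤ L → cutoffBound ε r (2 * r / L) ≤ C * decayRate ε L := by
  have hδr : ∀ L : ℝ, 2 ≤ L → 2 * r / L ≤ r := fun L hL => by
    rw [div_le_iff₀ (by linarith)]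
    nlinarith
  rcases lt_trichotomy ε 1 with h | rfl | h
  · have : 0 < 1 - ε := sub_pos.2 h
    refine ⟨(2 + (1 - ε)⁻¹) * (2 * r) ^ ε, by positivity, fun L hL => ?_⟩
    refine (cutoffBound_le_of_lt_one h (by positivity) (hδr L hL)).trans_eq ?_
    rw [decayRate, if_pos h, Real.div_rpow (by positivity) (by positivity),
      Real.rpow_neg (by positivity)]
    ring
  · refine ⟨10 * r, by positivity, fun L hL => ?_⟩
    have hlog : Real.log (r / (2 * r / L)) ≤ Real.log L := by
      have : r / (2 * r / L) = L / 2 := by field_simp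
      rw [this]
      exact Real.log_le_log (by positivity) (by linarith)
    rw [cutoffBound_one (by positivity) (hδr L hL), decayRate, if_neg (lt_irrefl _), if_pos rfl,
      Real.rpow_neg_one]
    calc 2 * r / L * (2 + Real.log (r / (2 * r / L))) ≤ 2 * r / L * (5 * Real.log L) := by
          gcongr
          linarith [one_le_two_mul_log hL]
      _ = 10 * r * (L⁻¹ * Real.log L) := by ring
  · have : 0 < ε - 1 := sub_pos.2 h
    refine ⟨(2 + (ε - 1)⁻¹) * r ^ (ε - 1) * (2 * r), by positivity, fun L hL => ?_⟩
    refine (cutoffBound_le_of_one_lt h (by positivity) (hδr L hL)).trans_eq ?_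
    rw [decayRate, if_neg h.not_gt, if_neg h.ne', Real.rpow_neg_one]
    ring

end Rates

/-! ### Decay on wedges of the first type -/

section Decay

variable {P : ℝ × ℝ → ℝ} {K s ε r θ₁ θ₂ : ℝ}

theorem decayRate_nonneg {L : ℝ} (hL : 1 ≤ L) : 0 ≤ decayRate ε L := by
  have := Real.log_nonneg hL
  unfold decayRate
  split_ifs <;> positivity

theorem exists_norm_oscInt_annularSector_le_decayRate (hε : 0 < ε) (hr : 0 < r) (hθ : θ₁ ≤ θ₂)
    (hθ' : θ₂ ≤ θ₁ + 2 * Real.pi) :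
    ∃ C > 0, ∀ (K : ℝ) (G : ℝ × ℝ → ℝ), IsSymbolOn nrm2 (closedSector r θ₁ θ₂) (ε - 2) K G →
      ∀ t u : ℝ, ‖oscInt G (annularSector 0 r θ₁ θ₂) t u‖ ≤
        K * C * decayRate ε (2 + nrm2 (t, u)) := by
  obtain ⟨C, hC, hcutoff⟩ := exists_cutoffBound_le_decayRate ε hr
  have := sub_nonneg.2 hθ
  set c := (θ₂ - θ₁) / ε + (2 + (θ₂ - θ₁) + 2 * r * (θ₂ - θ₁)) / (2 * r)
  have : 0 < c := by positivity
  refine ⟨c * C, by positivity, fun K G hG t u => ?_⟩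
  have hK := hG.nonneg
  calc ‖oscInt G (annularSector 0 r θ₁ θ₂) t u‖
      ≤ K * c * cutoffBound ε r (2 * r / (2 + nrm2 (t, u))) :=
        norm_oscInt_annularSector_le hε hr hθ hθ' hG t u
    _ ≤ K * c * (C * decayRate ε (2 + nrm2 (t, u))) := by
        gcongr
        exact hcutoff _ (le_add_of_nonneg_right (nrm2_nonneg _))
    _ = K * (c * C) * decayRate ε (2 + nrm2 (t, u)) := by ring

theorem exists_norm_oscInt_amplitude_mul_le_decayRate (hε : 0 < ε) (hr : 0 < r) (hθ : θ₁ ≤ θ₂)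
    (hθ' : θ₂ ≤ θ₁ + 2 * Real.pi) (hP : IsSymbolOn nrm2 (closedSector r θ₁ θ₂) s K P)
    (hs : ε ≤ s + 2) (A : ℝ) :
    ∃ C > 0, ∀ α : ℝ × ℝ → ℝ, AlphaBound α A → ∀ t u : ℝ,
      ‖oscInt (fun p => α p * P p) (annularSector 0 r θ₁ θ₂) t u‖ ≤
        C * decayRate ε (2 + nrm2 (t, u)) := by
  obtain ⟨C, hC, hdecay⟩ := exists_norm_oscInt_annularSector_le_decayRate hε hr hθ hθ'
  set M := 2 * (2 * A * K) * r ^ (0 + s - (ε - 2))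
  refine ⟨|M| * C + 1, by positivity, fun α hα t u => ?_⟩
  have hw : ∀ p ∈ closedSector r θ₁ θ₂, 0 < nrm2 p ∧ nrm2 p ≤ r := fun p hp =>
    pos_and_le_of_mem_closedSector hp
  have hsub : closedSector r θ₁ θ₂ ⊆ {0}ᶜ :=
    subset_compl_singleton_iff.2 zero_notMem_closedSector
  have hαP : IsSymbolOn nrm2 (closedSector r θ₁ θ₂) (ε - 2) M fun p => α p * P p :=
    ((hα.isSymbolOn.mono_set hsub).mul (fun p hp => (hw p hp).1) hP).mono_order hw
      (by linarith) hr.le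
  have hrate : 0 ≤ decayRate ε (2 + nrm2 (t, u)) :=
    decayRate_nonneg (by linarith [nrm2_nonneg (t, u)])
  refine (hdecay M _ hαP t u).trans ?_
  gcongr
  nlinarith [le_abs_self M]

end Decay

section StandardForm

variable {n : ℕ} {f : Fin n → ℝ × ℝ → ℝ} {γ : Fin n → ℝ} {E : Set (ℝ × ℝ)} {ε r R θ₁ θ₂ : ℝ}

theorem isEllipticSymbolOn_prod_abs_rpow {K : Fin n → ℝ} (γ : Fin n → ℝ) (hr : 0 < r) (hrR : r < R)
    (hθ : θ₁ < θ₂)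
    (hf : ∀ i, IsSymbolOn nrm2 (disk2 R) (vanishingOrder (f i)) (K i) (f i))
    (hlow : ∀ i, ∃ c > 0, ∀ p ∈ annularSector 0 r θ₁ θ₂,
      c * nrm2 p ^ vanishingOrder (f i) ≤ |f i p|) :
    IsEllipticSymbolOn nrm2 (closedSector r θ₁ θ₂) (∑ i, γ i * vanishingOrder (f i))
      fun p => ∏ i, |f i p| ^ γ i := by
  have hw : ∀ p ∈ closedSector r θ₁ θ₂, 0 < nrm2 p := fun p hp =>
    (pos_and_le_of_mem_closedSector hp).1
  refine IsEllipticSymbolOn.prod hw _ fun i _ => ?_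
  obtain ⟨c, hc, hlow⟩ := hlow i
  exact (isEllipticSymbolOn_closedSector (hf i) hr hrR hθ hc hlow).abs_rpow hw (γ i)

theorem oscInt_congr {g h : ℝ × ℝ → ℝ} {S : Set (ℝ × ℝ)} (hS : MeasurableSet S) (hgh : EqOn g h S)
    (t u : ℝ) : oscInt g S t u = oscInt h S t u :=
  setIntegral_congr_fun hS fun p hp => by simp only [hgh hp]

theorem IsFirstTypeWedge.subset_or_disjoint {W : Set (ℝ × ℝ)} (hW : IsFirstTypeWedge n f E r W) :
    W ⊆ E ∨ Disjoint W E := by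
  obtain ⟨θ₁, θ₂, -, -, rfl⟩ := isWedge_iff.1 hW.wedge
  refine subset_or_disjoint_of_disjoint_frontier isPreconnected_annularSector
    (hW.boundary.mono_left (subset_sdiff_singleton subset_closure fun h => ?_))
  exact zero_notMem_closedSector (annularSector_subset_closedSector h)

theorem exists_norm_oscInt_stdFun_le_decayRate {K : Fin n → ℝ} {d : ℕ} (hr : 0 < r) (hrR : r < R)
    (hf : ∀ i, IsSymbolOn nrm2 (disk2 R) (vanishingOrder (f i)) (K i) (f i))
    (hint : IntegrableOn (stdFun n f γ E) (disk2 R)) (hball : BallBound (stdFun n f γ E) ε d)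
    {W : Set (ℝ × ℝ)} (hW : IsFirstTypeWedge n f E r W) (A : ℝ) :
    ∃ C > 0, ∀ α : ℝ × ℝ → ℝ, AlphaBound α A → ∀ t u : ℝ,
      ‖oscInt (fun p => α p * stdFun n f γ E p) W t u‖ ≤
        C * decayRate ε (2 + nrm2 (t, u)) := by
  obtain ⟨θ₁, θ₂, hθ, hθ', rfl⟩ := isWedge_iff.1 hW.wedge
  have hmeas := measurableSet_annularSector hθ' (a := 0) (b := r) le_rfl
  rcases hW.subset_or_disjoint with hsub | hdisj
  · have hg : EqOn (stdFun n f γ E) (fun p => ∏ i, |f i p| ^ γ i) (annularSector 0 r θ₁ θ₂) :=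
      fun p hp => indicator_of_mem (hsub hp) _
    obtain ⟨⟨M, hsymbol⟩, k, hk, hlow⟩ := isEllipticSymbolOn_prod_abs_rpow γ hr hrR hθ hf fun i =>
      let ⟨c, hc, _, _, hcomp⟩ := hW.comparable i
      ⟨c, hc, fun p hp => (hcomp p hp).1.le⟩
    have hexp := hball.exponent_le (stdFun_nonneg f γ E) (hr.trans hrR) hint hr hθ hθ' hk
      fun p hp => (hlow p (annularSector_subset_closedSector hp)).trans_eq <| by
        rw [hg hp, abs_of_nonneg (by positivity)]
    obtain ⟨C, hC, hdecay⟩ :=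
      exists_norm_oscInt_amplitude_mul_le_decayRate hball.1 hr hθ.le hθ' hsymbol hexp A
    refine ⟨C, hC, fun α hα t u => ?_⟩
    rw [oscInt_congr hmeas (h := fun p => α p * ∏ i, |f i p| ^ γ i) fun p hp => by rw [hg hp]]
    exact hdecay α hα t u
  · refine ⟨1, one_pos, fun α _ t u => ?_⟩
    have hzero : EqOn (fun p => α p * stdFun n f γ E p) 0 (annularSector 0 r θ₁ θ₂) := by
      intro p hp
      simp [stdFun, disjoint_left.1 hdisj hp]
    rw [oscInt_congr hmeas (h := 0) hzero]
    simpa [oscInt] using decayRate_nonneg (by linarith [nrm2_nonneg (t, u)])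

end StandardForm

theorem le_mul_rpow_mul_log_pow_of_le_decayRate {x C ε L : ℝ} (hC : 0 ≤ C) (hL : 2 ≤ L) (d : ℕ)
    (hx : x ≤ C * decayRate ε L) :
    (ε < 1 → x ≤ 2 ^ d * C * L ^ (-ε) * Real.log L ^ d) ∧
    (ε = 1 → x ≤ 2 ^ d * C * L ^ (-(1 : ℝ)) * Real.log L ^ (d + 1)) ∧
    (1 < ε → x ≤ 2 ^ d * C * L ^ (-(1 : ℝ))) := by
  have hrate : 0 ≤ C * decayRate ε L := mul_nonneg hC (decayRate_nonneg (by linarith))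
  have hlog : x ≤ (2 * Real.log L) ^ d * (C * decayRate ε L) :=
    hx.trans (le_mul_of_one_le_left hrate (one_le_pow₀ (one_le_two_mul_log hL)))
  refine ⟨fun h => hlog.trans_eq ?_, fun h => hlog.trans_eq ?_, fun h => ?_⟩
  · rw [decayRate, if_pos h]
    ring
  · rw [decayRate, if_neg h.not_lt, if_pos h]
    ring
  · refine (hx.trans (le_mul_of_one_le_left hrate (one_le_pow₀ one_le_two (n := d)))).trans_eq ?_
    rw [decayRate, if_neg h.not_gt, if_neg h.ne', mul_assoc]

theorem wedge_decay_estimate_first_type_general {n : ℕ} (f : Fin n → ℝ × ℝ → ℝ) (γ : Fin n → ℝ)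
    (E : Set (ℝ × ℝ)) (hf : ∀ i, AnalyticAt ℝ (f i) 0)
    (hint : IntegrableAtFilter (stdFun n f γ E) (𝓝 0))
    (ε : ℝ) (d : ℕ) (hball : BallBound (stdFun n f γ E) ε d) :
    ∃ R > (0 : ℝ), ∀ r : ℝ, 0 < r → r < R →
      ∀ B' : Set (ℝ × ℝ), IsFirstTypeWedge n f E r B' →
      ∀ A : ℝ, ∃ C > (0 : ℝ), ∀ α : ℝ × ℝ → ℝ, AlphaBound α A → ∀ t u : ℝ,
        ‖oscInt (fun p => α p * stdFun n f γ E p) B' t u‖ ≤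
          C * decayRate ε (2 + nrm2 (t, u)) := by
  choose K hK using fun i => exists_isSymbolOn_disk2 (hf i)
  obtain ⟨U, hU, hgU⟩ := hint
  obtain ⟨R, ⟨hsymbol, hRU⟩, hR⟩ := ((eventually_all.2 hK).and
    (eventually_disk2_subset hU)).and self_mem_nhdsWithin |>.exists
  exact ⟨R, hR, fun r hr hrR _ hW A => exists_norm_oscInt_stdFun_le_decayRate hr hrR hsymbol
    (hgU.mono_set hRU) hball hW A⟩

theorem wedge_decay_estimate_first_type {n : ℕ} (f : Fin n → ℝ × ℝ → ℝ) (γ : Fin n → ℝ)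
    (E : Set (ℝ × ℝ)) (hsf : StandardForm n f γ E)
    (ε : ℝ) (d : ℕ) (hball : BallBound (stdFun n f γ E) ε d) :
    ∃ R > (0:ℝ), ∀ r : ℝ, 0 < r → r < R →
      ∀ B' : Set (ℝ × ℝ), IsFirstTypeWedge n f E r B' →
      ∀ A C : ℝ, ∃ Ca > (0:ℝ), ∀ α : ℝ × ℝ → ℝ, AlphaBound α A →
        FirstTypeEstimate α (stdFun n f γ E) B' C →
        ∀ t u : ℝ,
          (ε < 1 →
            ‖oscInt (fun p => α p * stdFun n f γ E p) B' t u‖ ≤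
              Ca * (2 + nrm2 (t, u)) ^ (-ε) * Real.log (2 + nrm2 (t, u)) ^ d) ∧
          (ε = 1 →
            ‖oscInt (fun p => α p * stdFun n f γ E p) B' t u‖ ≤
              Ca * (2 + nrm2 (t, u)) ^ (-(1:ℝ)) * Real.log (2 + nrm2 (t, u)) ^ (d + 1)) ∧
          (1 < ε →
            ‖oscInt (fun p => α p * stdFun n f γ E p) B' t u‖ ≤
              Ca * (2 + nrm2 (t, u)) ^ (-(1:ℝ))) := by
  obtain ⟨U, hU, hf⟩ := hsf.analytic
  obtain ⟨R, hR, hdecay⟩ := wedge_decay_estimate_first_type_general f γ E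
    (fun i => hf i 0 (mem_of_mem_nhds hU)) hsf.integ ε d hball
  refine ⟨R, hR, fun r hr hrR B' hB' A _ => ?_⟩
  obtain ⟨C, hC, hle⟩ := hdecay r hr hrR B' hB' A
  exact ⟨2 ^ d * C, by positivity, fun α hα _ t u =>
    le_mul_rpow_mul_log_pow_of_le_decayRate hC.le (le_add_of_nonneg_right (nrm2_nonneg _)) d
      (hle α hα t u)⟩
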